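/- Mean-square convergence of AdaGrad-Norm: for any deterministic initial point θ₁ ∈ ℝ^d and any S₀ > 0, lim_{n→∞} E[‖∇g(θ_n)‖²] = 0. -/

import Mathlib

open MeasureTheory Filter Topology

/-!
Write `aₙ = 1 / √Sₙ`. The learning rate of the `n`-th step is correlated with `Gₙ`; replacing it by
its predictable predecessor `aₙ` costs at most `aₙ - aₙ₊₁` times a second moment, and such
increments telescope against a Lyapunov function. For `g · (aₙ + c aₙ²) + C aₙ` this gives
`∑ E[aₙ² ‖∇g(θₙ)‖²] < ∞`, and for `((g - Δ)⁺)² (1 + c aₙ) + C aₙ` it then gives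
`sup E[g(θₙ)²] < ∞`; here `Δ` is such that small gradients occur only well inside `{g ≤ Δ}`.

By smoothness `‖∇g‖² ≤ 4 L g`, so `‖∇g(θₙ)‖²` is bounded in `L²`, hence uniformly integrable, and
almost sure convergence `∇g(θₙ) → 0` suffices. By Fatou `g(θₙ)` is almost surely bounded along a
subsequence, and martingale convergence makes the noise series summable wherever the gradient is
not small. If `Sₙ` stays bounded, the first summability result concludes. Otherwise `g(θₙ)` cannot
cross a level interval free of critical values infinitely often, because a crossing costs a fixed
amount of noise; as critical values are nowhere dense, `g(θₙ)` converges, and then so does the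
gradient, since each excursion of its norm would decrease `g` by a fixed amount.
-/

section Smooth

variable {E : Type*} [NormedAddCommGroup E] [InnerProductSpace ℝ E] [CompleteSpace E]
  {g : E → ℝ} {L : ℝ}

theorem le_add_inner_gradient_add_sq (hL : 0 ≤ L) (hg : Differentiable ℝ g)
    (hgrad : ∀ x y, ‖gradient g x - gradient g y‖ ≤ L * ‖x - y‖) (x u : E) :
    g (x + u) ≤ g x + inner ℝ (gradient g x) u + L * ‖u‖ ^ 2 := by
  have hbound : ‖g (x + u) - g x - inner ℝ (gradient g x) (x + u - x)‖ ≤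
      L * ‖x + u - x‖ * ‖x + u - x‖ := by
    refine (convex_segment x (x + u)).norm_image_sub_le_of_norm_hasFDerivWithin_le' (𝕜 := ℝ)
      (f' := fun z => InnerProductSpace.toDual ℝ E (gradient g z))
      (φ := InnerProductSpace.toDual ℝ E (gradient g x))
      (fun z _ => (hg z).hasGradientAt.hasFDerivAt.hasFDerivWithinAt)
      (fun z hz => ?_) (left_mem_segment ℝ x _) (right_mem_segment ℝ x _)
    rw [← map_sub, LinearIsometryEquiv.norm_map]
    refine (hgrad z x).trans (mul_le_mul_of_nonneg_left ?_ hL)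
    obtain ⟨t, ⟨ht₀, ht₁⟩, rfl⟩ := segment_eq_image' ℝ x (x + u) ▸ hz
    rw [add_sub_cancel_left, norm_smul, Real.norm_of_nonneg ht₀]
    exact mul_le_of_le_one_left (norm_nonneg _) ht₁
  rw [add_sub_cancel_left, Real.norm_eq_abs] at hbound
  linarith [le_of_abs_le hbound]

/-- A nonnegative differentiable function whose gradient is Lipschitz with constant `L > 0`. -/
structure IsNonnegSmooth (L : ℝ) (g : E → ℝ) : Prop where
  L_pos : 0 < L
  differentiable : Differentiable ℝ g
  nonneg : ∀ x, 0 ≤ g x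
  norm_gradient_sub_le : ∀ x y, ‖gradient g x - gradient g y‖ ≤ L * ‖x - y‖

namespace IsNonnegSmooth

variable (hg : IsNonnegSmooth L g)
include hg

theorem value_add_le (x u : E) :
    g (x + u) ≤ g x + inner ℝ (gradient g x) u + L * ‖u‖ ^ 2 :=
  le_add_inner_gradient_add_sq hg.L_pos.le hg.differentiable hg.norm_gradient_sub_le x u

theorem continuous_gradient : Continuous (gradient g) :=
  (LipschitzWith.of_dist_le_mul (K := ⟨L, hg.L_pos.le⟩) fun x y => by
    rw [dist_eq_norm, dist_eq_norm]
    exact hg.norm_gradient_sub_le x y).continuous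

theorem norm_gradient_le_add (x y : E) : ‖gradient g y‖ ≤ ‖gradient g x‖ + L * ‖y - x‖ :=
  (norm_le_norm_add_norm_sub' _ _).trans (add_le_add_right (hg.norm_gradient_sub_le y x) _)

theorem norm_gradient_sq_le (x : E) : ‖gradient g x‖ ^ 2 ≤ 4 * L * g x := by
  have hL := hg.L_pos
  have hdescent : 0 ≤ g x - (4 * L)⁻¹ * ‖gradient g x‖ ^ 2 := by
    calc 0 ≤ g (x + -((2 * L)⁻¹ • gradient g x)) := hg.nonneg _
      _ ≤ g x + inner ℝ (gradient g x) (-((2 * L)⁻¹ • gradient g x))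
          + L * ‖-((2 * L)⁻¹ • gradient g x)‖ ^ 2 := hg.value_add_le _ _
      _ = g x - (4 * L)⁻¹ * ‖gradient g x‖ ^ 2 := by
        rw [inner_neg_right, inner_smul_right, real_inner_self_eq_norm_sq, norm_neg, norm_smul,
          Real.norm_of_nonneg (by positivity)]
        field_simp
        ring
  rwa [sub_nonneg, inv_mul_le_iff₀ (by positivity)] at hdescent

theorem norm_gradient_le_sqrt (x : E) : ‖gradient g x‖ ≤ 2 * √L * √(1 + g x) := by
  refine abs_le_of_sq_le_sq' ?_ (by positivity) |>.2
  rw [mul_pow, mul_pow, Real.sq_sqrt hg.L_pos.le, Real.sq_sqrt (by linarith [hg.nonneg x])]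
  nlinarith [hg.norm_gradient_sq_le x, hg.L_pos]

theorem sqrt_value_add_le (x u : E) : √(1 + g (x + u)) ≤ √(1 + g x) + √L * ‖u‖ := by
  have hy : 0 ≤ 1 + g x := by linarith [hg.nonneg x]
  refine Real.sqrt_le_iff.2 ⟨by positivity, ?_⟩
  have hinner : inner ℝ (gradient g x) u ≤ 2 * √L * √(1 + g x) * ‖u‖ :=
    (real_inner_le_norm _ _).trans
      (mul_le_mul_of_nonneg_right (hg.norm_gradient_le_sqrt x) (norm_nonneg u))
  calc 1 + g (x + u) ≤ 1 + (g x + 2 * √L * √(1 + g x) * ‖u‖ + L * ‖u‖ ^ 2) := by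
        linarith [hg.value_add_le x u]
    _ = (√(1 + g x) + √L * ‖u‖) ^ 2 := by
        rw [add_sq, mul_pow, Real.sq_sqrt hy, Real.sq_sqrt hg.L_pos.le]
        ring

theorem sq_posPart_add_le {Δ α : ℝ} (hΔ : 0 ≤ Δ) (x : E) {u : E} (hu : ‖u‖ ≤ α) :
    max (g (x + u) - Δ) 0 ^ 2 ≤ max (g x - Δ) 0 ^ 2
      + 2 * max (g x - Δ) 0 * inner ℝ (gradient g x) u
      + (10 * L + 8 * L * Δ + 2 * L ^ 2 * α ^ 2) * (max (g x - Δ) 0 + 1) * ‖u‖ ^ 2 := by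
  have hL := hg.L_pos
  have hdescent := hg.value_add_le x u
  set i := inner ℝ (gradient g x) u
  set w := max (g x - Δ) 0
  have : 0 ≤ w := le_max_right _ _
  have hgw : g x - Δ ≤ w := le_max_left _ _
  have hposPart : max (g (x + u) - Δ) 0 ≤ |w + (i + L * ‖u‖ ^ 2)| :=
    max_le (le_trans (by linarith) (le_abs_self _)) (abs_nonneg _)
  have hsq : max (g (x + u) - Δ) 0 ^ 2 ≤ (w + (i + L * ‖u‖ ^ 2)) ^ 2 :=
    sq_abs (w + _) ▸ pow_le_pow_left₀ (le_max_right _ _) hposPart 2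
  have hinner : i ^ 2 ≤ 4 * L * (w + Δ) * ‖u‖ ^ 2 := by
    calc i ^ 2 ≤ (‖gradient g x‖ * ‖u‖) ^ 2 := sq_le_sq.2
          ((abs_real_inner_le_norm _ _).trans (le_abs_self _))
      _ ≤ 4 * L * (w + Δ) * ‖u‖ ^ 2 := by
        rw [mul_pow]
        gcongr
        exact (hg.norm_gradient_sq_le x).trans (by gcongr; linarith)
  have hquartic : (L * ‖u‖ ^ 2) ^ 2 ≤ L ^ 2 * α ^ 2 * ‖u‖ ^ 2 := by
    calc (L * ‖u‖ ^ 2) ^ 2 = L ^ 2 * ‖u‖ ^ 2 * ‖u‖ ^ 2 := by ring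
      _ ≤ L ^ 2 * α ^ 2 * ‖u‖ ^ 2 := by gcongr
  have hcross : (i + L * ‖u‖ ^ 2) ^ 2 ≤ 2 * i ^ 2 + 2 * (L * ‖u‖ ^ 2) ^ 2 :=
    add_sq_le.trans_eq (mul_add _ _ _)
  have hspare : 0 ≤ (2 * L + 8 * L * Δ * w + 2 * L ^ 2 * α ^ 2 * w) * ‖u‖ ^ 2 := by positivity
  nlinarith

end IsNonnegSmooth

end Smooth

section Landscape

theorem exists_pos_forall_mem_le_norm {X F : Type*} [PseudoMetricSpace X] [ProperSpace X]
    [NormedAddCommGroup F] {f : X → F} (hf : Continuous f) {δ : ℝ} (hδ : 0 < δ)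
    (hflat : ∀ᶠ x in Bornology.cobounded X, δ < ‖f x‖) {Z : Set X} (hZ : IsClosed Z)
    (hne : ∀ x ∈ Z, f x ≠ 0) : ∃ η > 0, ∀ x ∈ Z, η ≤ ‖f x‖ := by
  have hsmall_bdd : Bornology.IsBounded {x | ‖f x‖ ≤ δ} :=
    Bornology.isBounded_def.2 (hflat.mono fun _ hx hle => hle.not_gt hx)
  have hcompact : IsCompact (Z ∩ {x | ‖f x‖ ≤ δ}) :=
    Metric.isCompact_of_isClosed_isBounded
      (hZ.inter (isClosed_le hf.norm continuous_const)) (hsmall_bdd.subset Set.inter_subset_right)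
  obtain ⟨η, hη, hle⟩ := hcompact.exists_forall_le' hf.norm.continuousOn (a := 0)
    fun x hx => norm_pos_iff.2 (hne x hx.1)
  refine ⟨min η δ, lt_min hη hδ, fun x hx => ?_⟩
  rcases le_total ‖f x‖ δ with hx' | hx'
  · exact (min_le_left _ _).trans (hle x ⟨hx, hx'⟩)
  · exact (min_le_right _ _).trans hx'

theorem exists_Icc_subset_compl_of_isNowhereDense {K : Set ℝ} (hK : IsNowhereDense K) {a b : ℝ}
    (hab : a < b) : ∃ a' b', a < a' ∧ a' < b' ∧ b' < b ∧ Set.Icc a' b' ⊆ Kᶜ := by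
  obtain ⟨y, hy, hyK⟩ : ∃ y ∈ Set.Ioo a b, y ∉ closure K := by
    by_contra! hcover
    have hsub : Set.Ioo a b ⊆ interior (closure K) := interior_maximal hcover isOpen_Ioo
    rw [hK] at hsub
    exact (Set.nonempty_Ioo.2 hab).ne_empty (Set.subset_empty_iff.1 hsub)
  obtain ⟨a', b', -, hnhds, hsub⟩ := exists_Icc_mem_subset_of_mem_nhds
    ((isOpen_Ioo.inter isClosed_closure.isOpen_compl).mem_nhds ⟨hy, hyK⟩)
  have hab' : a' < b' := (Icc_mem_nhds_iff.1 hnhds).1.trans (Icc_mem_nhds_iff.1 hnhds).2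
  exact ⟨a', b', (hsub (Set.left_mem_Icc.2 hab'.le)).1.1, hab',
    (hsub (Set.right_mem_Icc.2 hab'.le)).1.2, fun _ hx hxK => (hsub hx).2 (subset_closure hxK)⟩

variable {E : Type*} [NormedAddCommGroup E] [InnerProductSpace ℝ E] [FiniteDimensional ℝ E]
  {g : E → ℝ} {δ : ℝ}

theorem exists_noncritical_band (hg : Continuous g) (hgrad : Continuous (gradient g)) (hδ : 0 < δ)
    (hflat : ∀ᶠ x in Bornology.cobounded E, δ < ‖gradient g x‖)
    (hsard : IsNowhereDense (g '' {x | gradient g x = 0})) {a b : ℝ} (hab : a < b) :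
    ∃ a' b' η, a < a' ∧ a' < b' ∧ b' < b ∧ 0 < η ∧
      ∀ x, g x ∈ Set.Icc a' b' → η ≤ ‖gradient g x‖ := by
  have : ProperSpace E := FiniteDimensional.proper ℝ E
  obtain ⟨a', b', ha', hab', hb', hband⟩ := exists_Icc_subset_compl_of_isNowhereDense hsard hab
  obtain ⟨η, hη, hle⟩ := exists_pos_forall_mem_le_norm hgrad hδ hflat
    (isClosed_Icc.preimage hg : IsClosed (g ⁻¹' Set.Icc a' b'))
    fun x hx hcrit => hband hx ⟨x, hcrit, rfl⟩
  exact ⟨a', b', η, ha', hab', hb', hη, hle⟩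

theorem exists_level_of_norm_gradient_lt (hg : Continuous g)
    (hflat : ∀ᶠ x in Bornology.cobounded E, δ < ‖gradient g x‖) (α : ℝ) :
    ∃ Δ, 0 ≤ Δ ∧ ∀ x u : E, ‖gradient g x‖ < δ → ‖u‖ ≤ α → g x ≤ Δ ∧ g (x + u) ≤ Δ := by
  have : ProperSpace E := FiniteDimensional.proper ℝ E
  have hsmall_bdd : Bornology.IsBounded {x | ‖gradient g x‖ < δ} :=
    Bornology.isBounded_def.2 (hflat.mono fun _ hx hlt => hlt.not_gt hx)
  obtain ⟨r, hr⟩ := hsmall_bdd.exists_norm_le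
  obtain ⟨C, hC⟩ := (isCompact_closedBall (0 : E) (r + |α|)).exists_bound_of_continuousOn
    hg.continuousOn
  have hball : ∀ x ∈ Metric.closedBall (0 : E) (r + |α|), g x ≤ max C 0 := fun x hx =>
    ((le_abs_self _).trans (hC x hx)).trans (le_max_left _ _)
  refine ⟨max C 0, le_max_right _ _, fun x u hx hu => ⟨hball x ?_, hball (x + u) ?_⟩⟩ <;>
    rw [mem_closedBall_zero_iff]
  · exact (hr x hx).trans (le_add_of_nonneg_right (abs_nonneg α))
  · exact norm_add_le_of_le (hr x hx) (hu.trans (le_abs_self α))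

end Landscape

section GradientWeight

variable {E : Type*} [NormedAddCommGroup E]

/-- A weight on gradients `v` which makes squared stochastic gradients of conditional second moment
at most `σ₀ * ‖v‖ ^ 2 + σ₁` cost no more than `‖v‖ ^ 2`, while staying bounded below away from
`v = 0`. -/
noncomputable def gradientWeight (σ₀ σ₁ : ℝ) (v : E) : ℝ := ‖v‖ ^ 2 / (σ₀ * ‖v‖ ^ 2 + σ₁ + 1)

variable {σ₀ σ₁ : ℝ} (hσ₀ : 0 ≤ σ₀) (hσ₁ : 0 ≤ σ₁)
include hσ₀ hσ₁

theorem gradientWeight_nonneg (v : E) : 0 ≤ gradientWeight σ₀ σ₁ v := by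
  unfold gradientWeight
  positivity

theorem continuous_gradientWeight : Continuous (gradientWeight σ₀ σ₁ : E → ℝ) :=
  (continuous_norm.pow 2).div (by fun_prop) fun v => by positivity

theorem gradientWeight_mul_le (v : E) :
    gradientWeight σ₀ σ₁ v * (σ₀ * ‖v‖ ^ 2 + σ₁) ≤ ‖v‖ ^ 2 := by
  rw [gradientWeight, div_mul_eq_mul_div, div_le_iff₀ (by positivity)]
  nlinarith [sq_nonneg ‖v‖]

theorem one_le_mul_gradientWeight {η : ℝ} (hη : 0 < η) {v : E} (hv : η ≤ ‖v‖) :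
    1 ≤ (σ₀ + (σ₁ + 1) / η ^ 2) * gradientWeight σ₀ σ₁ v := by
  rw [gradientWeight, ← mul_div_assoc, one_le_div (by positivity)]
  calc σ₀ * ‖v‖ ^ 2 + σ₁ + 1 = σ₀ * ‖v‖ ^ 2 + (σ₁ + 1) / η ^ 2 * η ^ 2 := by
        field_simp
        ring
    _ ≤ (σ₀ + (σ₁ + 1) / η ^ 2) * ‖v‖ ^ 2 := by
        rw [add_mul]
        gcongr

theorem two_mul_norm_mul_le_gradientWeight_mul_sq_add (v : E) (γ : ℝ) :
    2 * (‖v‖ * γ) ≤ gradientWeight σ₀ σ₁ v * γ ^ 2 + (σ₀ * ‖v‖ ^ 2 + σ₁ + 1) := by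
  have hq : 0 < σ₀ * ‖v‖ ^ 2 + σ₁ + 1 := by positivity
  rw [gradientWeight]
  set q := σ₀ * ‖v‖ ^ 2 + σ₁ + 1
  have hsq : ‖v‖ ^ 2 / q * γ ^ 2 + q - 2 * (‖v‖ * γ) = (‖v‖ * γ - q) ^ 2 / q := by
    field_simp
    ring
  linarith [show 0 ≤ (‖v‖ * γ - q) ^ 2 / q by positivity]

end GradientWeight

section Path

variable {E : Type*} [NormedAddCommGroup E]

/-- A realization of the AdaGrad-Norm recursion driven by the stochastic gradients `G`. Indices
start at `0`, so that the step from `θ n` uses `G n` and the already updated `S (n + 1)`; the rate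
known before the step is `(√(S n))⁻¹`. -/
structure AdaGradNormPath [NormedSpace ℝ E] (α₀ : ℝ) (G θ : ℕ → E) (S : ℕ → ℝ) : Prop where
  α₀_pos : 0 < α₀
  S_zero_pos : 0 < S 0
  S_succ : ∀ n, S (n + 1) = S n + ‖G n‖ ^ 2
  θ_succ : ∀ n, θ (n + 1) = θ n - (α₀ / √(S (n + 1))) • G n

namespace AdaGradNormPath

section Rate

variable [NormedSpace ℝ E] {α₀ : ℝ} {G θ : ℕ → E} {S : ℕ → ℝ} (h : AdaGradNormPath α₀ G θ S)
include h

theorem monotone_S : Monotone S :=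
  monotone_nat_of_le_succ fun n => h.S_succ n ▸ le_add_of_nonneg_right (sq_nonneg _)

theorem S_pos (n : ℕ) : 0 < S n := h.S_zero_pos.trans_le (h.monotone_S n.zero_le)

theorem rate_pos (n : ℕ) : 0 < (√(S n))⁻¹ := inv_pos.2 (Real.sqrt_pos.2 (h.S_pos n))

theorem antitone_rate : Antitone fun n => (√(S n))⁻¹ := fun _ _ hmn =>
  inv_anti₀ (Real.sqrt_pos.2 (h.S_pos _)) (Real.sqrt_le_sqrt (h.monotone_S hmn))

theorem rate_succ_le (n : ℕ) : (√(S (n + 1)))⁻¹ ≤ (√(S n))⁻¹ := h.antitone_rate n.le_succ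

theorem rate_sq_sub_rate_succ_sq (n : ℕ) : (√(S n))⁻¹ ^ 2 - (√(S (n + 1)))⁻¹ ^ 2 =
    (√(S n))⁻¹ ^ 2 * (√(S (n + 1)))⁻¹ ^ 2 * ‖G n‖ ^ 2 := by
  have hS := h.S_pos n
  have hS' := h.S_pos (n + 1)
  have hG : ‖G n‖ ^ 2 = S (n + 1) - S n := by rw [h.S_succ]; ring
  rw [inv_pow, inv_pow, Real.sq_sqrt hS.le, Real.sq_sqrt hS'.le, hG]
  field_simp

theorem rate_succ_mul_norm_le_one (n : ℕ) : (√(S (n + 1)))⁻¹ * ‖G n‖ ≤ 1 := by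
  rw [inv_mul_le_iff₀ (Real.sqrt_pos.2 (h.S_pos _)), mul_one]
  refine Real.le_sqrt_of_sq_le ?_
  linarith [h.S_succ n, h.S_pos n]

theorem rate_mul_rate_succ_sq_mul_le (n : ℕ) :
    (√(S n))⁻¹ * ((√(S (n + 1)))⁻¹ ^ 2 * ‖G n‖ ^ 2) ≤ 2 * ((√(S n))⁻¹ - (√(S (n + 1)))⁻¹) := by
  have hdiff := h.rate_sq_sub_rate_succ_sq n
  have ha := h.rate_pos n
  have hba := h.rate_succ_le n
  set a := (√(S n))⁻¹
  set b := (√(S (n + 1)))⁻¹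
  refine le_of_mul_le_mul_left ?_ ha
  calc a * (a * (b ^ 2 * ‖G n‖ ^ 2)) = (a + b) * (a - b) := by linear_combination -hdiff
    _ ≤ 2 * a * (a - b) := by gcongr; linarith
    _ = a * (2 * (a - b)) := by ring

theorem rate_sub_mul_norm_le (n : ℕ) : ((√(S n))⁻¹ - (√(S (n + 1)))⁻¹) * ‖G n‖ ≤
    (√(S n))⁻¹ ^ 2 * ‖G n‖ ^ 2 := by
  have hdiff := h.rate_sq_sub_rate_succ_sq n
  have ha := h.rate_pos n
  have hb := h.rate_pos (n + 1)
  have hbG := h.rate_succ_mul_norm_le_one n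
  set a := (√(S n))⁻¹
  set b := (√(S (n + 1)))⁻¹
  have hsub : a - b ≤ a ^ 2 * ‖G n‖ := by
    refine le_of_mul_le_mul_left ?_ (add_pos ha hb)
    calc (a + b) * (a - b) = a ^ 2 * b * ‖G n‖ * (b * ‖G n‖) := by linear_combination hdiff
      _ ≤ a ^ 2 * b * ‖G n‖ := mul_le_of_le_one_right (by positivity) hbG
      _ ≤ (a + b) * (a ^ 2 * ‖G n‖) := by
        linarith [show 0 ≤ a ^ 3 * ‖G n‖ by positivity]
  calc (a - b) * ‖G n‖ ≤ a ^ 2 * ‖G n‖ * ‖G n‖ := by gcongr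
    _ = a ^ 2 * ‖G n‖ ^ 2 := by ring

theorem rate_succ_sq_mul_le (n : ℕ) : (√(S (n + 1)))⁻¹ ^ 2 * ‖G n‖ ^ 2 ≤
    (√(S n))⁻¹ ^ 2 * ‖G n‖ ^ 2 := by
  gcongr ?_ ^ 2 * _
  exact h.rate_succ_le n

theorem θ_succ_eq_add (n : ℕ) : θ (n + 1) = θ n + -((α₀ * (√(S (n + 1)))⁻¹) • G n) := by
  rw [h.θ_succ, div_eq_mul_inv, sub_eq_add_neg]

theorem norm_step (n : ℕ) :
    ‖-((α₀ * (√(S (n + 1)))⁻¹) • G n)‖ = α₀ * ((√(S (n + 1)))⁻¹ * ‖G n‖) := by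
  rw [norm_neg, norm_smul, Real.norm_of_nonneg (mul_pos h.α₀_pos (h.rate_pos _)).le, mul_assoc]

theorem norm_step_le (n : ℕ) : ‖-((α₀ * (√(S (n + 1)))⁻¹) • G n)‖ ≤ α₀ := by
  rw [h.norm_step]
  exact mul_le_of_le_one_right h.α₀_pos.le (h.rate_succ_mul_norm_le_one n)

theorem norm_le (n : ℕ) : ‖θ n‖ ≤ ‖θ 0‖ + n * α₀ := by
  induction n with
  | zero => simp
  | succ n ih =>
    rw [h.θ_succ_eq_add]
    have hstep := norm_add_le_of_le ih (h.norm_step_le n)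
    push_cast
    linarith

theorem S_le_mul_exp (n : ℕ) :
    S n ≤ S 0 * Real.exp (∑ k ∈ Finset.range n, (√(S k))⁻¹ ^ 2 * ‖G k‖ ^ 2) := by
  induction n with
  | zero => simp
  | succ n ih =>
    have hS := h.S_pos n
    have hfactor : S (n + 1) = S n * ((√(S n))⁻¹ ^ 2 * ‖G n‖ ^ 2 + 1) := by
      rw [h.S_succ, inv_pow, Real.sq_sqrt hS.le]
      field_simp
      ring
    rw [hfactor, Finset.sum_range_succ, Real.exp_add, ← mul_assoc]
    exact mul_le_mul ih (Real.add_one_le_exp _) (by positivity) (hS.le.trans ih)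

theorem bddAbove_range_S_of_summable
    (hsum : Summable fun n => (√(S n))⁻¹ ^ 2 * ‖G n‖ ^ 2) : BddAbove (Set.range S) := by
  refine ⟨S 0 * Real.exp (∑' k, (√(S k))⁻¹ ^ 2 * ‖G k‖ ^ 2), ?_⟩
  rintro _ ⟨n, rfl⟩
  refine (h.S_le_mul_exp n).trans (mul_le_mul_of_nonneg_left ?_ h.S_zero_pos.le)
  exact Real.exp_le_exp.2 (hsum.sum_le_tsum _ fun k _ => by positivity)

theorem tendsto_rate_zero (hS : ¬BddAbove (Set.range S)) :
    Tendsto (fun n => (√(S n))⁻¹) atTop (𝓝 0) :=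
  tendsto_inv_atTop_zero.comp (Real.tendsto_sqrt_atTop.comp
    (tendsto_atTop_atTop_of_monotone' h.monotone_S hS))

end Rate

section Descent

variable [InnerProductSpace ℝ E] [CompleteSpace E] {α₀ L : ℝ} {G θ : ℕ → E} {S : ℕ → ℝ} {g : E → ℝ}
  (h : AdaGradNormPath α₀ G θ S) (hg : IsNonnegSmooth L g)
include h hg

theorem value_succ_le (n : ℕ) :
    g (θ (n + 1)) ≤ g (θ n) - α₀ * ((√(S (n + 1)))⁻¹ * inner ℝ (gradient g (θ n)) (G n))
      + L * α₀ ^ 2 * ((√(S (n + 1)))⁻¹ ^ 2 * ‖G n‖ ^ 2) := by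
  have hdescent := hg.value_add_le (θ n) (-((α₀ * (√(S (n + 1)))⁻¹) • G n))
  rw [← h.θ_succ_eq_add, h.norm_step, inner_neg_right, inner_smul_right] at hdescent
  linarith

theorem sqrt_value_succ_le (n : ℕ) :
    √(1 + g (θ (n + 1))) ≤ √(1 + g (θ n)) + √L * (α₀ * ((√(S (n + 1)))⁻¹ * ‖G n‖)) := by
  rw [h.θ_succ_eq_add, ← h.norm_step]
  exact hg.sqrt_value_add_le _ _

theorem norm_gradient_succ_le (n : ℕ) : ‖gradient g (θ (n + 1))‖ ≤
    ‖gradient g (θ n)‖ + L * (α₀ * ((√(S (n + 1)))⁻¹ * ‖G n‖)) := by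
  rw [h.θ_succ_eq_add, ← h.norm_step]
  simpa only [add_sub_cancel_left] using hg.norm_gradient_le_add (θ n) (θ n + _)

end Descent

end AdaGradNormPath

end Path

section Excursion

theorem eventually_lt_of_frequently_le {y : ℕ → ℝ} {lo hi : ℝ} (hlo : lo < hi)
    (hfreq : ∃ᶠ n in atTop, y n ≤ lo)
    (hexc : ∀ᶠ M in atTop, ∀ m ≥ M, ∀ n > m, y m ≤ lo →
      (∀ k ∈ Finset.Ico (m + 1) n, lo < y k ∧ y k < hi) → y n < hi) :
    ∀ᶠ n in atTop, y n < hi := by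
  obtain ⟨M, hM⟩ := hexc.exists
  obtain ⟨N, hMN, hyN⟩ := frequently_atTop.1 hfreq M
  filter_upwards [eventually_ge_atTop N] with n hn
  induction n using Nat.strong_induction_on with
  | _ n ih =>
    by_cases hyn : y n ≤ lo
    · exact hyn.trans_lt hlo
    classical
    set m := Nat.findGreatest (y · ≤ lo) n
    have hym : y m ≤ lo := Nat.findGreatest_spec (P := (y · ≤ lo)) hn hyN
    have hNm : N ≤ m := Nat.le_findGreatest hn hyN
    have hmn : m < n := lt_of_le_of_ne (Nat.findGreatest_le n) fun heq => hyn (heq ▸ hym)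
    refine hM m (hMN.trans hNm) n hmn hym fun k hk => ?_
    obtain ⟨hmk, hkn⟩ := Finset.mem_Ico.1 hk
    exact ⟨not_le.1 (Nat.findGreatest_is_greatest (P := (y · ≤ lo)) (by omega) hkn.le),
      ih k hkn (by omega)⟩

theorem eventually_norm_sum_Ico_lt {F : Type*} [SeminormedAddCommGroup F] {f : ℕ → F}
    (hf : ∃ l, Tendsto (fun n => ∑ k ∈ Finset.range n, f k) atTop (𝓝 l)) {ε : ℝ} (hε : 0 < ε) :
    ∀ᶠ M in atTop, ∀ m ≥ M, ∀ n ≥ m, ‖∑ k ∈ Finset.Ico m n, f k‖ < ε := by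
  obtain ⟨l, hl⟩ := hf
  obtain ⟨M, hM⟩ := Metric.cauchySeq_iff.1 hl.cauchySeq ε hε
  filter_upwards [eventually_ge_atTop M] with M' hM' m hm n hn
  rw [Finset.sum_Ico_eq_sub _ hn, ← dist_eq_norm]
  exact hM n (by omega) m (by omega)

end Excursion

/-- The summability properties of a realization of AdaGrad-Norm which hold almost surely and from
which convergence of the gradients follows deterministically. The value noise is tested against the
bounded vector field `∇√(1 + g)`, and the weights `min 1 (j * ‖∇g‖)` in the vector noise equal `1`
wherever `‖∇g‖ ≥ j⁻¹`. -/
structure RegularNoise {E : Type*} [NormedAddCommGroup E] [InnerProductSpace ℝ E] [CompleteSpace E]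
    (σ₀ σ₁ : ℝ) (g : E → ℝ) (G θ : ℕ → E) (S : ℕ → ℝ) : Prop where
  summable_gradient_sq : Summable fun n => (√(S n))⁻¹ ^ 2 * ‖gradient g (θ n)‖ ^ 2
  summable_weight_mul_sq : Summable fun n =>
    gradientWeight σ₀ σ₁ (gradient g (θ n)) * ((√(S n))⁻¹ ^ 2 * ‖G n‖ ^ 2)
  tendsto_sum_value : ∃ l, Tendsto (fun n => ∑ k ∈ Finset.range n, (√(S k))⁻¹ *
    inner ℝ ((2 * √(1 + g (θ k)))⁻¹ • gradient g (θ k)) (G k - gradient g (θ k))) atTop (𝓝 l)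
  tendsto_sum_vector : ∀ j : ℕ, ∃ l, Tendsto (fun n => ∑ k ∈ Finset.range n,
    (min 1 (j * ‖gradient g (θ k)‖) * (√(S k))⁻¹) • (G k - gradient g (θ k))) atTop (𝓝 l)

namespace RegularNoise

variable {E : Type*} [NormedAddCommGroup E] [InnerProductSpace ℝ E] [CompleteSpace E]
  {σ₀ σ₁ η ε : ℝ} {g : E → ℝ} {G θ : ℕ → E} {S : ℕ → ℝ} (hnoise : RegularNoise σ₀ σ₁ g G θ S)
include hnoise

theorem eventually_sum_sq_lt (hσ₀ : 0 ≤ σ₀) (hσ₁ : 0 ≤ σ₁) (hη : 0 < η) (hε : 0 < ε) :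
    ∀ᶠ M in atTop, ∀ m ≥ M, ∀ n ≥ m, (∀ k ∈ Finset.Ico m n, η ≤ ‖gradient g (θ k)‖) →
      ∑ k ∈ Finset.Ico m n, (√(S k))⁻¹ ^ 2 * ‖G k‖ ^ 2 < ε := by
  obtain ⟨κ, hκ⟩ : ∃ κ, κ = σ₀ + (σ₁ + 1) / η ^ 2 := ⟨_, rfl⟩
  have hκ_pos : 0 < κ := by rw [hκ]; positivity
  filter_upwards [eventually_norm_sum_Ico_lt
    ⟨_, hnoise.summable_weight_mul_sq.hasSum.tendsto_sum_nat⟩ (div_pos hε hκ_pos)]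
    with M hM m hm n hn hlarge
  calc ∑ k ∈ Finset.Ico m n, (√(S k))⁻¹ ^ 2 * ‖G k‖ ^ 2
      ≤ ∑ k ∈ Finset.Ico m n,
          κ * (gradientWeight σ₀ σ₁ (gradient g (θ k)) * ((√(S k))⁻¹ ^ 2 * ‖G k‖ ^ 2)) := by
        refine Finset.sum_le_sum fun k hk => ?_
        rw [← mul_assoc κ]
        exact le_mul_of_one_le_left (by positivity)
          (hκ ▸ one_le_mul_gradientWeight hσ₀ hσ₁ hη (hlarge k hk))
    _ < κ * (ε / κ) := by
        rw [← Finset.mul_sum]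
        exact mul_lt_mul_of_pos_left ((le_abs_self _).trans_lt (hM m hm n hn)) hκ_pos
    _ = ε := mul_div_cancel₀ ε hκ_pos.ne'

theorem eventually_norm_sum_vector_lt (hη : 0 < η) (hε : 0 < ε) :
    ∀ᶠ M in atTop, ∀ m ≥ M, ∀ n ≥ m, (∀ k ∈ Finset.Ico m n, η ≤ ‖gradient g (θ k)‖) →
      ‖∑ k ∈ Finset.Ico m n, (√(S k))⁻¹ • (G k - gradient g (θ k))‖ < ε := by
  obtain ⟨j, hj⟩ := exists_nat_ge η⁻¹
  filter_upwards [eventually_norm_sum_Ico_lt (hnoise.tendsto_sum_vector j) hε]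
    with M hM m hm n hn hlarge
  refine (congrArg norm (Finset.sum_congr rfl fun k hk => ?_)).trans_lt (hM m hm n hn)
  have hweight : 1 ≤ j * ‖gradient g (θ k)‖ :=
    (inv_mul_cancel₀ hη.ne').symm.trans_le
      (mul_le_mul hj (hlarge k hk) hη.le (Nat.cast_nonneg j))
  rw [min_eq_left hweight, one_mul]

end RegularNoise

namespace AdaGradNormPath

variable {E : Type*} [NormedAddCommGroup E] [InnerProductSpace ℝ E] [CompleteSpace E]
  {α₀ L σ₀ σ₁ δ₀ δ₁ η ε : ℝ} {g : E → ℝ} {G θ : ℕ → E} {S : ℕ → ℝ}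
  (h : AdaGradNormPath α₀ G θ S) (hnoise : RegularNoise σ₀ σ₁ g G θ S)
include h hnoise

theorem tendsto_gradient_zero_of_bddAbove (hS : BddAbove (Set.range S)) :
    Tendsto (fun n => gradient g (θ n)) atTop (𝓝 0) := by
  obtain ⟨B, hB⟩ := hS
  rw [tendsto_zero_iff_norm_tendsto_zero]
  have hlim := (hnoise.summable_gradient_sq.tendsto_atTop_zero.const_mul B).sqrt
  rw [mul_zero, Real.sqrt_zero] at hlim
  refine squeeze_zero (fun n => norm_nonneg _) (fun n => Real.le_sqrt_of_sq_le ?_) hlim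
  rw [inv_pow, Real.sq_sqrt (h.S_pos n).le, ← mul_assoc, ← div_eq_mul_inv]
  exact le_mul_of_one_le_left (sq_nonneg _) ((one_le_div (h.S_pos n)).2 (hB ⟨n, rfl⟩))

theorem frequently_norm_gradient_le (hσ₀ : 0 ≤ σ₀) (hσ₁ : 0 ≤ σ₁) (hS : ¬BddAbove (Set.range S))
    (hη : 0 < η) : ∃ᶠ n in atTop, ‖gradient g (θ n)‖ ≤ η := by
  intro hlarge
  refine hS (h.bddAbove_range_S_of_summable ((hnoise.summable_weight_mul_sq.mul_left
    (σ₀ + (σ₁ + 1) / η ^ 2)).of_norm_bounded_eventually_nat ?_))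
  filter_upwards [hlarge] with n hn
  rw [Real.norm_of_nonneg (by positivity), ← mul_assoc]
  exact le_mul_of_one_le_left (by positivity)
    (one_le_mul_gradientWeight hσ₀ hσ₁ hη (not_le.1 hn).le)

theorem tendsto_norm_step_zero (hσ₀ : 0 ≤ σ₀) (hσ₁ : 0 ≤ σ₁) (hS : ¬BddAbove (Set.range S))
    (hδ₀ : 0 < δ₀) (hsharp : ∀ n, ‖gradient g (θ n)‖ ≤ δ₀ → ‖G n‖ ≤ δ₁) :
    Tendsto (fun n => α₀ * ((√(S (n + 1)))⁻¹ * ‖G n‖)) atTop (𝓝 0) := by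
  have hlim : Tendsto (fun n => α₀ * ((√(S n))⁻¹ * |δ₁| + √((σ₀ + (σ₁ + 1) / δ₀ ^ 2) *
      (gradientWeight σ₀ σ₁ (gradient g (θ n)) * ((√(S n))⁻¹ ^ 2 * ‖G n‖ ^ 2)))))
      atTop (𝓝 0) := by
    simpa using (((h.tendsto_rate_zero hS).mul_const |δ₁|).add
      (hnoise.summable_weight_mul_sq.tendsto_atTop_zero.const_mul _).sqrt).const_mul α₀
  have hα := h.α₀_pos
  refine squeeze_zero (fun n => ?_) (fun n => mul_le_mul_of_nonneg_left ?_ hα.le) hlim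
  · exact h.norm_step n ▸ norm_nonneg _
  have ha := h.rate_pos n
  refine (mul_le_mul_of_nonneg_right (h.rate_succ_le n) (norm_nonneg _)).trans ?_
  rcases le_total ‖gradient g (θ n)‖ δ₀ with hsmall | hlarge
  · refine (mul_le_mul_of_nonneg_left ((hsharp n hsmall).trans (le_abs_self δ₁)) ha.le).trans ?_
    exact le_add_of_nonneg_right (Real.sqrt_nonneg _)
  · refine (Real.le_sqrt_of_sq_le ?_).trans (le_add_of_nonneg_left (by positivity))
    rw [mul_pow, ← mul_assoc (σ₀ + _)]
    exact le_mul_of_one_le_left (by positivity)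
      (one_le_mul_gradientWeight hσ₀ hσ₁ hδ₀ hlarge)

theorem eventually_norm_sub_le (hσ₀ : 0 ≤ σ₀) (hσ₁ : 0 ≤ σ₁) (hη : 0 < η) (hε : 0 < ε) :
    ∀ᶠ M in atTop, ∀ m ≥ M, ∀ n ≥ m, (∀ k ∈ Finset.Ico m n, η ≤ ‖gradient g (θ k)‖) →
      ‖θ n - θ m‖ ≤ α₀ * ∑ k ∈ Finset.Ico m n, (√(S k))⁻¹ * ‖gradient g (θ k)‖ + ε := by
  have hα := h.α₀_pos
  have hε' : 0 < ε / (2 * α₀) := by positivity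
  filter_upwards [hnoise.eventually_norm_sum_vector_lt hη hε',
    hnoise.eventually_sum_sq_lt hσ₀ hσ₁ hη hε'] with M hvector hsq m hm n hn hlarge
  set drift := ∑ k ∈ Finset.Ico m n, (√(S k))⁻¹ • gradient g (θ k)
  set noise := ∑ k ∈ Finset.Ico m n, (√(S k))⁻¹ • (G k - gradient g (θ k))
  set lag := ∑ k ∈ Finset.Ico m n, ((√(S k))⁻¹ - (√(S (k + 1)))⁻¹) • G k
  have hdecomp : θ n - θ m = α₀ • (lag - noise - drift) := by
    rw [← Finset.sum_sub_distrib, ← Finset.sum_sub_distrib, ← Finset.sum_Ico_sub (f := θ) hn,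
      Finset.smul_sum]
    refine Finset.sum_congr rfl fun k _ => ?_
    rw [h.θ_succ_eq_add k]
    module
  have hlag : ‖lag‖ ≤ ε / (2 * α₀) :=
    (norm_sum_le_of_le _ fun k _ => by
      rw [norm_smul, Real.norm_of_nonneg (sub_nonneg.2 (h.rate_succ_le k))]
      exact h.rate_sub_mul_norm_le k).trans (hsq m hm n hn hlarge).le
  have hdrift : ‖drift‖ ≤ ∑ k ∈ Finset.Ico m n, (√(S k))⁻¹ * ‖gradient g (θ k)‖ :=
    norm_sum_le_of_le _ fun k _ => by rw [norm_smul, Real.norm_of_nonneg (h.rate_pos k).le]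
  calc ‖θ n - θ m‖ = α₀ * ‖lag - noise - drift‖ := by
        rw [hdecomp, norm_smul, Real.norm_of_nonneg hα.le]
    _ ≤ α₀ * (ε / (2 * α₀) + ε / (2 * α₀)
          + ∑ k ∈ Finset.Ico m n, (√(S k))⁻¹ * ‖gradient g (θ k)‖) := by
        gcongr
        exact norm_sub_le_of_le (norm_sub_le_of_le hlag (hvector m hm n hn hlarge).le) hdrift
    _ = α₀ * ∑ k ∈ Finset.Ico m n, (√(S k))⁻¹ * ‖gradient g (θ k)‖ + ε := by
        field_simp
        ring

end AdaGradNormPath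

theorem sqrt_one_add_le {x y : ℝ} (hx : 0 ≤ x) (hy : 0 ≤ y) :
    √(1 + y) ≤ √(1 + x) + (2 * √(1 + x))⁻¹ * (y - x) := by
  have hsqrt_x := Real.sq_sqrt (show 0 ≤ 1 + x by positivity)
  have hsqrt_y := Real.sq_sqrt (show 0 ≤ 1 + y by positivity)
  rw [← sub_le_iff_le_add', le_inv_mul_iff₀ (by positivity)]
  linarith [sq_nonneg (√(1 + y) - √(1 + x))]

namespace AdaGradNormPath

variable {E : Type*} [NormedAddCommGroup E] [InnerProductSpace ℝ E]

section Descent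

variable [CompleteSpace E] {α₀ L σ₀ σ₁ η ε : ℝ} {g : E → ℝ} {G θ : ℕ → E} {S : ℕ → ℝ}
  (h : AdaGradNormPath α₀ G θ S) (hg : IsNonnegSmooth L g)
include h hg

-- Replacing `1 / √(S (n + 1))` by the predictable rate `1 / √(S n)` costs a term of the order of
-- the squared step.
theorem value_succ_le_add_sq (n : ℕ) :
    g (θ (n + 1)) ≤ g (θ n) - α₀ * ((√(S n))⁻¹ * inner ℝ (gradient g (θ n)) (G n))
      + (α₀ * ‖gradient g (θ n)‖ + L * α₀ ^ 2) * ((√(S n))⁻¹ ^ 2 * ‖G n‖ ^ 2) := by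
  have hα := h.α₀_pos
  have hL := hg.L_pos
  have hlag : ((√(S n))⁻¹ - (√(S (n + 1)))⁻¹) * inner ℝ (gradient g (θ n)) (G n) ≤
      ‖gradient g (θ n)‖ * ((√(S n))⁻¹ ^ 2 * ‖G n‖ ^ 2) := by
    calc ((√(S n))⁻¹ - (√(S (n + 1)))⁻¹) * inner ℝ (gradient g (θ n)) (G n)
        ≤ ((√(S n))⁻¹ - (√(S (n + 1)))⁻¹) * (‖gradient g (θ n)‖ * ‖G n‖) :=
          mul_le_mul_of_nonneg_left (real_inner_le_norm _ _) (sub_nonneg.2 (h.rate_succ_le n))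
      _ = ‖gradient g (θ n)‖ * (((√(S n))⁻¹ - (√(S (n + 1)))⁻¹) * ‖G n‖) := by ring
      _ ≤ ‖gradient g (θ n)‖ * ((√(S n))⁻¹ ^ 2 * ‖G n‖ ^ 2) := by
          exact mul_le_mul_of_nonneg_left (h.rate_sub_mul_norm_le n) (norm_nonneg _)
  have hquadratic := mul_le_mul_of_nonneg_left (h.rate_succ_sq_mul_le n)
    (show 0 ≤ L * α₀ ^ 2 by positivity)
  linarith [h.value_succ_le hg n, mul_le_mul_of_nonneg_left hlag hα.le]

theorem sqrt_value_succ_add_le (n : ℕ) :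
    √(1 + g (θ (n + 1))) + α₀ * ((√(S n))⁻¹ *
        ((2 * √(1 + g (θ n)))⁻¹ * ‖gradient g (θ n)‖ ^ 2)) ≤
      √(1 + g (θ n)) - α₀ * ((√(S n))⁻¹ * inner ℝ ((2 * √(1 + g (θ n)))⁻¹ • gradient g (θ n))
        (G n - gradient g (θ n)))
      + (α₀ * √L + L * α₀ ^ 2) * ((√(S n))⁻¹ ^ 2 * ‖G n‖ ^ 2) := by
  have hα := h.α₀_pos
  have hLα : 0 ≤ L * α₀ ^ 2 := mul_nonneg hg.L_pos.le (sq_nonneg _)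
  have hf : 1 ≤ √(1 + g (θ n)) := Real.one_le_sqrt.2 (by linarith [hg.nonneg (θ n)])
  have hconcave := sqrt_one_add_le (hg.nonneg (θ n)) (hg.nonneg (θ (n + 1)))
  have hgrad := hg.norm_gradient_le_sqrt (θ n)
  have hvalue := h.value_succ_le_add_sq hg n
  rw [inner_smul_left, inner_sub_right, real_inner_self_eq_norm_sq]
  simp only [conj_trivial]
  set f := √(1 + g (θ n))
  set r := (√(S n))⁻¹ ^ 2 * ‖G n‖ ^ 2
  have hcoefficient : α₀ * ‖gradient g (θ n)‖ + L * α₀ ^ 2 ≤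
      2 * f * (α₀ * √L + L * α₀ ^ 2) := by
    nlinarith [mul_le_mul_of_nonneg_left hgrad hα.le, mul_le_mul_of_nonneg_left hf hLα]
  have hremainder := mul_le_mul_of_nonneg_right hcoefficient (show 0 ≤ r by positivity)
  have hincrement : (2 * f)⁻¹ * (g (θ (n + 1)) - g (θ n)) ≤ (2 * f)⁻¹ *
      (2 * f * ((α₀ * √L + L * α₀ ^ 2) * r)
        - α₀ * ((√(S n))⁻¹ * inner ℝ (gradient g (θ n)) (G n))) :=
    mul_le_mul_of_nonneg_left (by linarith) (by positivity)
  rw [mul_sub _ (2 * f * _), inv_mul_cancel_left₀ (by positivity)] at hincrement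
  linarith

theorem eventually_sqrt_value_add_le (hnoise : RegularNoise σ₀ σ₁ g G θ S) (hσ₀ : 0 ≤ σ₀)
    (hσ₁ : 0 ≤ σ₁) (hη : 0 < η) (hε : 0 < ε) :
    ∀ᶠ M in atTop, ∀ m ≥ M, ∀ n ≥ m, (∀ k ∈ Finset.Ico m n, η ≤ ‖gradient g (θ k)‖) →
      √(1 + g (θ n)) + α₀ * ∑ k ∈ Finset.Ico m n, (√(S k))⁻¹ *
        ((2 * √(1 + g (θ k)))⁻¹ * ‖gradient g (θ k)‖ ^ 2) ≤ √(1 + g (θ m)) + ε := by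
  have hα := h.α₀_pos
  have hL := hg.L_pos
  obtain ⟨C, hC⟩ : ∃ C, C = α₀ * √L + L * α₀ ^ 2 := ⟨_, rfl⟩
  have hC_pos : 0 < C := by rw [hC]; positivity
  filter_upwards [eventually_norm_sum_Ico_lt hnoise.tendsto_sum_value
      (show 0 < ε / (2 * α₀) by positivity),
    hnoise.eventually_sum_sq_lt hσ₀ hσ₁ hη (show 0 < ε / (2 * C) by positivity)]
    with M hvalue hsq m hm n hn hlarge
  have htelescope := Finset.sum_le_sum fun k (_ : k ∈ Finset.Ico m n) =>
    sub_nonneg.2 (h.sqrt_value_succ_add_le hg k)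
  simp only [← hC, Finset.sum_const_zero, Finset.sum_add_distrib, Finset.sum_sub_distrib,
    ← Finset.mul_sum] at htelescope
  have hvalues := Finset.sum_Ico_sub (fun k => √(1 + g (θ k))) hn
  rw [Finset.sum_sub_distrib] at hvalues
  have hnoise_le := mul_le_mul_of_nonneg_left (neg_le_of_abs_le (hvalue m hm n hn).le) hα.le
  have hsq_le := mul_le_mul_of_nonneg_left (hsq m hm n hn hlarge).le hC_pos.le
  have hα_cancel : α₀ * (ε / (2 * α₀)) = ε / 2 := by field_simp
  have hC_cancel : C * (ε / (2 * C)) = ε / 2 := by field_simp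
  linarith

end Descent
end AdaGradNormPath

theorem IsNonnegSmooth.norm_gradient_le_mul_sq {E : Type*} [NormedAddCommGroup E]
    [InnerProductSpace ℝ E] [CompleteSpace E] {L η F : ℝ} {g : E → ℝ} (hg : IsNonnegSmooth L g)
    {x : E} (hη : 0 < η) (hlarge : η ≤ ‖gradient g x‖) (hF : √(1 + g x) ≤ F) :
    ‖gradient g x‖ ≤ 2 * F / η * ((2 * √(1 + g x))⁻¹ * ‖gradient g x‖ ^ 2) := by
  have hroot : 0 < √(1 + g x) := Real.sqrt_pos.2 (by linarith [hg.nonneg x])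
  calc ‖gradient g x‖ ≤ ‖gradient g x‖ * (F / √(1 + g x) * (‖gradient g x‖ / η)) :=
        le_mul_of_one_le_right (norm_nonneg _)
          (one_le_mul_of_one_le_of_one_le ((one_le_div hroot).2 hF) ((one_le_div hη).2 hlarge))
    _ = 2 * F / η * ((2 * √(1 + g x))⁻¹ * ‖gradient g x‖ ^ 2) := by field_simp

namespace AdaGradNormPath

variable {E : Type*} [NormedAddCommGroup E] [InnerProductSpace ℝ E]
  {α₀ L σ₀ σ₁ δ δ₀ δ₁ η ε a b : ℝ} {g : E → ℝ} {G θ : ℕ → E} {S : ℕ → ℝ}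

section Convergence

variable [CompleteSpace E] (h : AdaGradNormPath α₀ G θ S) (hg : IsNonnegSmooth L g)
  (hnoise : RegularNoise σ₀ σ₁ g G θ S) (hσ₀ : 0 ≤ σ₀) (hσ₁ : 0 ≤ σ₁)
include h hg hnoise hσ₀ hσ₁

theorem eventually_value_lt_of_noncritical_band
    (hstep : Tendsto (fun n => α₀ * ((√(S (n + 1)))⁻¹ * ‖G n‖)) atTop (𝓝 0))
    (hη : 0 < η) (hab : a < b) (hband : ∀ x, g x ∈ Set.Icc a b → η ≤ ‖gradient g x‖)
    (hfreq : ∃ᶠ n in atTop, g (θ n) ≤ a) : ∀ᶠ n in atTop, g (θ n) < b := by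
  obtain ⟨n₀, hn₀⟩ := hfreq.exists
  have ha : 0 ≤ a := (hg.nonneg _).trans hn₀
  have hlevel : √(1 + a) < √(1 + b) := Real.sqrt_lt_sqrt (by positivity) (by linarith)
  have hle_iff : ∀ n, √(1 + g (θ n)) ≤ √(1 + a) ↔ g (θ n) ≤ a := fun n => by
    rw [Real.sqrt_le_sqrt_iff (by positivity), add_le_add_iff_left]
  have hlt_iff : ∀ n, √(1 + g (θ n)) < √(1 + b) ↔ g (θ n) < b := fun n => by
    rw [Real.sqrt_lt_sqrt_iff (by linarith [hg.nonneg (θ n)]), add_lt_add_iff_left]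
  set ε := (√(1 + b) - √(1 + a)) / 3 with hε_def
  have hε : 0 < ε := by linarith
  have hsmall_step := (hstep.const_mul √L).eventually_lt_const (by simpa using hε)
  suffices ∀ᶠ n in atTop, √(1 + g (θ n)) < √(1 + b) from this.mono fun n => (hlt_iff n).1
  refine eventually_lt_of_frequently_le hlevel (hfreq.mono fun n => (hle_iff n).2) ?_
  filter_upwards [eventually_forall_ge_atTop.2 hsmall_step,
    h.eventually_sqrt_value_add_le hg hnoise hσ₀ hσ₁ hη hε] with M hentry hdescent m hm n hn hlow hk
  have hlarge : ∀ k ∈ Finset.Ico (m + 1) n, η ≤ ‖gradient g (θ k)‖ := fun k hk' =>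
    hband _ ⟨(not_le.1 ((hle_iff k).not.1 (hk k hk').1.not_ge)).le, ((hlt_iff k).1 (hk k hk').2).le⟩
  have hdrift : 0 ≤ α₀ * ∑ k ∈ Finset.Ico (m + 1) n, (√(S k))⁻¹ *
      ((2 * √(1 + g (θ k)))⁻¹ * ‖gradient g (θ k)‖ ^ 2) :=
    mul_nonneg h.α₀_pos.le (Finset.sum_nonneg fun k _ => by positivity)
  linarith [hdescent (m + 1) (hm.trans m.le_succ) n hn hlarge, hentry m hm,
    h.sqrt_value_succ_le hg m]

theorem eventually_norm_sub_lt_of_tendsto_value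
    (hvalue : ∃ c, Tendsto (fun n => g (θ n)) atTop (𝓝 c)) (hη : 0 < η) (hε : 0 < ε) :
    ∀ᶠ M in atTop, ∀ m ≥ M, ∀ n ≥ m, (∀ k ∈ Finset.Ico m n, η ≤ ‖gradient g (θ k)‖) →
      ‖θ n - θ m‖ < ε := by
  obtain ⟨c, hc⟩ := hvalue
  have hroot : Tendsto (fun n => √(1 + g (θ n))) atTop (𝓝 √(1 + c)) := (hc.const_add 1).sqrt
  obtain ⟨F, hF_def⟩ : ∃ F, F = √(1 + c) + 1 := ⟨_, rfl⟩
  have hF : 0 < F := by rw [hF_def]; positivity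
  have hbound := hroot.eventually_le_const (show √(1 + c) < F by linarith)
  set ρ := η * ε / (8 * F) with hρ_def
  have hρ : 0 < ρ := by positivity
  filter_upwards [h.eventually_sqrt_value_add_le hg hnoise hσ₀ hσ₁ hη hρ,
    h.eventually_norm_sub_le hnoise hσ₀ hσ₁ hη (half_pos hε),
    eventually_forall_ge_atTop.2 hbound,
    eventually_forall_ge_atTop.2 (Metric.tendsto_nhds.1 hroot (ρ / 2) (half_pos hρ))]
    with M hdescent hdisplacement hroot_le hroot_near m hm n hn hlarge
  have hsum : ∑ k ∈ Finset.Ico m n, (√(S k))⁻¹ * ‖gradient g (θ k)‖ ≤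
      2 * F / η * ∑ k ∈ Finset.Ico m n, (√(S k))⁻¹ *
        ((2 * √(1 + g (θ k)))⁻¹ * ‖gradient g (θ k)‖ ^ 2) := by
    rw [Finset.mul_sum]
    refine Finset.sum_le_sum fun k hk => ?_
    rw [mul_left_comm]
    exact mul_le_mul_of_nonneg_left (hg.norm_gradient_le_mul_sq hη (hlarge k hk)
      (hroot_le k (hm.trans (Finset.mem_Ico.1 hk).1))) (h.rate_pos k).le
  have hdrop : √(1 + g (θ m)) - √(1 + g (θ n)) < ρ := by
    have hdist := dist_triangle_right √(1 + g (θ m)) √(1 + g (θ n)) √(1 + c)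
    rw [Real.dist_eq] at hdist
    linarith [le_abs_self (√(1 + g (θ m)) - √(1 + g (θ n))), hroot_near m hm,
      hroot_near n (hm.trans hn)]
  set drift := ∑ k ∈ Finset.Ico m n, (√(S k))⁻¹ *
    ((2 * √(1 + g (θ k)))⁻¹ * ‖gradient g (θ k)‖ ^ 2)
  have hdrift : α₀ * drift < 2 * ρ := by linarith [hdescent m hm n hn hlarge]
  calc ‖θ n - θ m‖ ≤ α₀ * (2 * F / η * drift) + ε / 2 :=
        (hdisplacement m hm n hn hlarge).trans (by gcongr; exact h.α₀_pos.le)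
    _ = 2 * F / η * (α₀ * drift) + ε / 2 := by ring
    _ < 2 * F / η * (2 * ρ) + ε / 2 := by gcongr
    _ = ε := by
        rw [hρ_def]
        field_simp
        ring

theorem tendsto_gradient_zero_of_tendsto_value
    (hvalue : ∃ c, Tendsto (fun n => g (θ n)) atTop (𝓝 c)) (hS : ¬BddAbove (Set.range S))
    (hstep : Tendsto (fun n => α₀ * ((√(S (n + 1)))⁻¹ * ‖G n‖)) atTop (𝓝 0)) :
    Tendsto (fun n => gradient g (θ n)) atTop (𝓝 0) := by
  have hL := hg.L_pos
  rw [Metric.tendsto_nhds]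
  intro ρ hρ
  simp only [dist_zero_right]
  obtain ⟨η, hη, hηρ⟩ : ∃ η > 0, 3 * η = ρ := ⟨ρ / 3, by positivity, by ring⟩
  refine eventually_lt_of_frequently_le (lo := η) (by linarith)
    (h.frequently_norm_gradient_le hnoise hσ₀ hσ₁ hS hη) ?_
  have hsmall_step := (hstep.const_mul L).eventually_lt_const (by simpa using hη)
  filter_upwards [eventually_forall_ge_atTop.2 hsmall_step,
    h.eventually_norm_sub_lt_of_tendsto_value hg hnoise hσ₀ hσ₁ hvalue hη (div_pos hη hL)]
    with M hentry hdisplacement m hm n hn hlow hk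
  have hmove := hdisplacement (m + 1) (hm.trans m.le_succ) n hn fun k hk' => (hk k hk').1.le
  rw [lt_div_iff₀' hL] at hmove
  linarith [hg.norm_gradient_le_add (θ (m + 1)) (θ n), h.norm_gradient_succ_le hg m, hentry m hm]

end Convergence

section FiniteDimensional

variable [FiniteDimensional ℝ E] (h : AdaGradNormPath α₀ G θ S) (hg : IsNonnegSmooth L g)
  (hnoise : RegularNoise σ₀ σ₁ g G θ S) (hσ₀ : 0 ≤ σ₀) (hσ₁ : 0 ≤ σ₁)
include h hg hnoise hσ₀ hσ₁

theorem exists_tendsto_value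
    (hstep : Tendsto (fun n => α₀ * ((√(S (n + 1)))⁻¹ * ‖G n‖)) atTop (𝓝 0))
    (hδ : 0 < δ) (hflat : ∀ᶠ x in Bornology.cobounded E, δ < ‖gradient g x‖)
    (hsard : IsNowhereDense (g '' {x | gradient g x = 0}))
    (hfreq : ∃ N, ∃ᶠ n in atTop, g (θ n) ≤ N) : ∃ c, Tendsto (fun n => g (θ n)) atTop (𝓝 c) := by
  have hcross : ∀ a b, a < b → (∃ᶠ n in atTop, g (θ n) ≤ a) → ∀ᶠ n in atTop, g (θ n) < b := by
    intro a b hab hlow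
    obtain ⟨a', b', η, ha', hab', hb', hη, hband⟩ := exists_noncritical_band
      hg.differentiable.continuous hg.continuous_gradient hδ hflat hsard hab
    exact (h.eventually_value_lt_of_noncritical_band hg hnoise hσ₀ hσ₁ hstep hη hab' hband
      (hlow.mono fun n hn => hn.trans ha'.le)).mono fun n hn => hn.trans hb'
  obtain ⟨N, hN⟩ := hfreq
  refine tendsto_of_no_upcrossings dense_univ (fun a _ b _ hab ⟨hlow, hhigh⟩ => ?_)
    ⟨N + 1, ?_⟩ ⟨0, eventually_map.2 (Eventually.of_forall fun n => hg.nonneg (θ n))⟩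
  · exact hhigh ((hcross a b hab (hlow.mono fun _ => le_of_lt)).mono fun n hn => hn.le.not_gt)
  · exact (hcross N (N + 1) (lt_add_one N) hN).mono fun _ => le_of_lt

theorem tendsto_gradient_zero (hδ : 0 < δ)
    (hflat : ∀ᶠ x in Bornology.cobounded E, δ < ‖gradient g x‖)
    (hsard : IsNowhereDense (g '' {x | gradient g x = 0}))
    (hδ₀ : 0 < δ₀) (hsharp : ∀ n, ‖gradient g (θ n)‖ ≤ δ₀ → ‖G n‖ ≤ δ₁)
    (hfreq : ∃ N, ∃ᶠ n in atTop, g (θ n) ≤ N) :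
    Tendsto (fun n => gradient g (θ n)) atTop (𝓝 0) := by
  by_cases hS : BddAbove (Set.range S)
  · exact h.tendsto_gradient_zero_of_bddAbove hnoise hS
  have hstep := h.tendsto_norm_step_zero hnoise hσ₀ hσ₁ hS hδ₀ hsharp
  exact h.tendsto_gradient_zero_of_tendsto_value hg hnoise hσ₀ hσ₁
    (h.exists_tendsto_value hg hnoise hσ₀ hσ₁ hstep hδ hflat hsard hfreq) hS hstep

end FiniteDimensional

end AdaGradNormPath

section Young

variable {E : Type*} [NormedAddCommGroup E] [InnerProductSpace ℝ E]

theorem neg_mul_inner_le (x : ℝ) (v w : E) :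
    -(x * inner ℝ v w) ≤ ‖v‖ ^ 2 / 4 + x ^ 2 * ‖w‖ ^ 2 := by
  have hsq := norm_add_sq_real ((1 / 2 : ℝ) • v) (x • w)
  rw [inner_smul_left, inner_smul_right, norm_smul, norm_smul, mul_pow, mul_pow, Real.norm_eq_abs,
    Real.norm_eq_abs, sq_abs, sq_abs, conj_trivial] at hsq
  linarith [sq_nonneg ‖(1 / 2 : ℝ) • v + x • w‖]

theorem mul_inner_le_gradientWeight {σ₀ σ₁ s t : ℝ} (hσ₀ : 0 ≤ σ₀) (hσ₁ : 0 ≤ σ₁) (ht : 0 ≤ t)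
    (hts : t ≤ s) (v w : E) : t * inner ℝ v w ≤
      s / 2 * (gradientWeight σ₀ σ₁ v * ‖w‖ ^ 2) + t / 2 * (σ₀ * ‖v‖ ^ 2 + σ₁ + 1) := by
  have hyoung := two_mul_norm_mul_le_gradientWeight_mul_sq_add hσ₀ hσ₁ v ‖w‖
  have hinner := mul_le_mul_of_nonneg_left ((real_inner_le_norm v w).trans
    ((le_div_iff₀' two_pos).2 hyoung)) ht
  have hweight := mul_le_mul_of_nonneg_right hts
    (mul_nonneg (gradientWeight_nonneg hσ₀ hσ₁ v) (sq_nonneg ‖w‖))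
  linarith

end Young

namespace AdaGradNormPath

section Rate

variable {E : Type*} [NormedAddCommGroup E] [NormedSpace ℝ E] {α₀ : ℝ} {G θ : ℕ → E} {S : ℕ → ℝ}
  (h : AdaGradNormPath α₀ G θ S)
include h

theorem rate_succ_cube_mul_le (n : ℕ) :
    (√(S (n + 1)))⁻¹ ^ 3 * ‖G n‖ ^ 2 ≤ 2 * ((√(S n))⁻¹ - (√(S (n + 1)))⁻¹) := by
  rw [pow_succ', mul_assoc]
  exact (mul_le_mul_of_nonneg_right (h.rate_succ_le n) (by positivity)).trans
    (h.rate_mul_rate_succ_sq_mul_le n)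

theorem rate_succ_sq_mul_le_add {s : ℝ} (hs : 0 < s) (n : ℕ) :
    (√(S (n + 1)))⁻¹ ^ 2 * ‖G n‖ ^ 2 ≤ s * ((√(S n))⁻¹ * ‖G n‖ ^ 2)
      + ((√(S n))⁻¹ - (√(S (n + 1)))⁻¹) / s := by
  have ha := h.rate_pos n
  have hba := h.rate_succ_le n
  have hb := h.rate_pos (n + 1)
  have hdecay := h.rate_mul_rate_succ_sq_mul_le n
  set a := (√(S n))⁻¹
  set b := (√(S (n + 1)))⁻¹
  have hab : (b ^ 2 * ‖G n‖) ^ 2 ≤ a * (2 * (a - b)) := by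
    calc (b ^ 2 * ‖G n‖) ^ 2 = b * (b * (b ^ 2 * ‖G n‖ ^ 2)) := by ring
      _ ≤ a * (a * (b ^ 2 * ‖G n‖ ^ 2)) := by gcongr
      _ ≤ a * (2 * (a - b)) := by gcongr
  have hsquare : 2 * s * a * (b ^ 2 * ‖G n‖ ^ 2) ≤
      (s * a * ‖G n‖) ^ 2 + (b ^ 2 * ‖G n‖) ^ 2 := by
    linarith [two_mul_le_add_sq (s * a * ‖G n‖) (b ^ 2 * ‖G n‖)]
  rw [← sub_nonneg]
  refine nonneg_of_mul_nonneg_right (a := 2 * s * a) ?_ (by positivity)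
  have hcancel : 2 * s * a * ((a - b) / s) = a * (2 * (a - b)) := by field_simp
  linarith [sq_nonneg (s * a * ‖G n‖)]

theorem rate_succ_pow_four_mul_le {A : ℝ} (hA : (√(S 0))⁻¹ ≤ A) (n : ℕ) :
    (√(S (n + 1)))⁻¹ ^ 4 * ‖G n‖ ^ 2 ≤ A * (2 * ((√(S n))⁻¹ - (√(S (n + 1)))⁻¹)) := by
  rw [pow_succ' _ 3, mul_assoc]
  exact mul_le_mul ((h.antitone_rate (n + 1).zero_le).trans hA) (h.rate_succ_cube_mul_le n)
    (by have := h.rate_pos (n + 1); positivity) ((h.rate_pos 0).le.trans hA)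

theorem rate_sq_sub_le {A : ℝ} (hA : (√(S 0))⁻¹ ≤ A) (n : ℕ) :
    (√(S n))⁻¹ ^ 2 - (√(S (n + 1)))⁻¹ ^ 2 ≤ A * (2 * ((√(S n))⁻¹ - (√(S (n + 1)))⁻¹)) := by
  have hsum : (√(S n))⁻¹ + (√(S (n + 1)))⁻¹ ≤ 2 * A := by
    linarith [h.rate_succ_le n, h.antitone_rate n.zero_le]
  calc (√(S n))⁻¹ ^ 2 - (√(S (n + 1)))⁻¹ ^ 2
      = ((√(S n))⁻¹ + (√(S (n + 1)))⁻¹) * ((√(S n))⁻¹ - (√(S (n + 1)))⁻¹) := sq_sub_sq _ _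
    _ ≤ 2 * A * ((√(S n))⁻¹ - (√(S (n + 1)))⁻¹) :=
        mul_le_mul_of_nonneg_right hsum (sub_nonneg.2 (h.rate_succ_le n))
    _ = A * (2 * ((√(S n))⁻¹ - (√(S (n + 1)))⁻¹)) := by ring

end Rate

variable {E : Type*} [NormedAddCommGroup E] [InnerProductSpace ℝ E] [CompleteSpace E]
  {α₀ L σ₀ σ₁ : ℝ} {g : E → ℝ} {G θ : ℕ → E} {S : ℕ → ℝ} (h : AdaGradNormPath α₀ G θ S)
  (hg : IsNonnegSmooth L g)
include h hg

theorem rate_sq_sub_mul_inner_le (hσ₀ : 0 ≤ σ₀) (hσ₁ : 0 ≤ σ₁) {A : ℝ} (hA : (√(S 0))⁻¹ ≤ A)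
    (n : ℕ) :
    ((√(S n))⁻¹ ^ 2 - (√(S (n + 1)))⁻¹ ^ 2) * inner ℝ (gradient g (θ n)) (G n) ≤
      (√(S n))⁻¹ ^ 2 / 2 * (gradientWeight σ₀ σ₁ (gradient g (θ n)) * ‖G n‖ ^ 2)
      + 2 * L * σ₀ * g (θ n) * ((√(S n))⁻¹ ^ 2 - (√(S (n + 1)))⁻¹ ^ 2)
      + A * (σ₁ + 1) * ((√(S n))⁻¹ - (√(S (n + 1)))⁻¹) := by
  have hq := mul_le_mul_of_nonneg_left (hg.norm_gradient_sq_le (θ n)) hσ₀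
  have hsq_le : (√(S (n + 1)))⁻¹ ^ 2 ≤ (√(S n))⁻¹ ^ 2 := by
    have hb := h.rate_pos (n + 1)
    gcongr ?_ ^ 2
    exact h.rate_succ_le n
  have hsq_sub := mul_le_mul_of_nonneg_left (h.rate_sq_sub_le hA n)
    (show 0 ≤ (σ₁ + 1) / 2 by positivity)
  have hyoung := mul_inner_le_gradientWeight hσ₀ hσ₁ (sub_nonneg.2 hsq_le)
    (sub_le_self _ (sq_nonneg _)) (gradient g (θ n)) (G n)
  have hbudget := mul_le_mul_of_nonneg_left hq (div_nonneg (sub_nonneg.2 hsq_le) two_pos.le)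
  linarith

theorem lyapunov_value_succ_le (hσ₀ : 0 ≤ σ₀) (hσ₁ : 0 ≤ σ₁) {A c C : ℝ} (hA : (√(S 0))⁻¹ ≤ A)
    (hc : c = 2 * α₀ * L * σ₀)
    (hC : C = 2 * L * α₀ ^ 2 + 2 * A * (c * L * α₀ ^ 2 + α₀ * c ^ 2 + α₀ / 2 * (σ₁ + 1))) (n : ℕ) :
    g (θ (n + 1)) * ((√(S (n + 1)))⁻¹ + c * (√(S (n + 1)))⁻¹ ^ 2) + C * (√(S (n + 1)))⁻¹ ≤
      g (θ n) * ((√(S n))⁻¹ + c * (√(S n))⁻¹ ^ 2) + C * (√(S n))⁻¹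
      - α₀ * (√(S n))⁻¹ ^ 2 * inner ℝ (gradient g (θ n)) (G n)
      + α₀ / 2 * (√(S n))⁻¹ ^ 2 * (gradientWeight σ₀ σ₁ (gradient g (θ n)) * ‖G n‖ ^ 2)
      + α₀ / 4 * (√(S n))⁻¹ ^ 2 * ‖gradient g (θ n)‖ ^ 2 := by
  have hα := h.α₀_pos
  have hL := hg.L_pos
  have hb := h.rate_pos (n + 1)
  have hc_nonneg : 0 ≤ c := by rw [hc]; positivity
  have hvalue := h.value_succ_le hg n
  have hcube := h.rate_succ_cube_mul_le n
  have hfourth := h.rate_succ_pow_four_mul_le hA n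
  have hcross := neg_mul_inner_le (c * (√(S (n + 1)))⁻¹) (gradient g (θ n)) (G n)
  have hlag := mul_le_mul_of_nonneg_left (h.rate_sq_sub_mul_inner_le hg hσ₀ hσ₁ hA n) hα.le
  have hba := h.rate_succ_le n
  have hy_sub := mul_nonneg (hg.nonneg (θ n)) (sub_nonneg.2 (h.rate_succ_le n))
  set a := (√(S n))⁻¹
  set b := (√(S (n + 1)))⁻¹
  set i := inner ℝ (gradient g (θ n)) (G n)
  have hdescent : (b + c * b ^ 2) * g (θ (n + 1)) ≤ (b + c * b ^ 2) *
      (g (θ n) - α₀ * (b * i) + L * α₀ ^ 2 * (b ^ 2 * ‖G n‖ ^ 2)) :=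
    mul_le_mul_of_nonneg_left hvalue (by positivity)
  have hcross_le : -(α₀ * c * b ^ 3 * i) ≤
      α₀ / 4 * (a ^ 2 * ‖gradient g (θ n)‖ ^ 2) + α₀ * c ^ 2 * (A * (2 * (a - b))) := by
    calc -(α₀ * c * b ^ 3 * i) = α₀ * b ^ 2 * -(c * b * i) := by ring
      _ ≤ α₀ * b ^ 2 * (‖gradient g (θ n)‖ ^ 2 / 4 + (c * b) ^ 2 * ‖G n‖ ^ 2) := by gcongr
      _ = α₀ / 4 * (b ^ 2 * ‖gradient g (θ n)‖ ^ 2) + α₀ * c ^ 2 * (b ^ 4 * ‖G n‖ ^ 2) := by ring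
      _ ≤ _ := by gcongr
  have hremainder : L * α₀ ^ 2 * (b ^ 3 * ‖G n‖ ^ 2) + c * L * α₀ ^ 2 * (b ^ 4 * ‖G n‖ ^ 2) ≤
      L * α₀ ^ 2 * (2 * (a - b)) + c * L * α₀ ^ 2 * (A * (2 * (a - b))) := by gcongr
  have hvalue_coefficient : α₀ * (2 * L * σ₀ * g (θ n)) = c * g (θ n) := by rw [hc]; ring
  rw [hC]
  linear_combination hdescent + hlag + hcross_le + hremainder + hy_sub
    + (a ^ 2 - b ^ 2) * hvalue_coefficient

end AdaGradNormPath

theorem IsNonnegSmooth.mul_norm_gradient_sq_add_le {E : Type*} [NormedAddCommGroup E]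
    [InnerProductSpace ℝ E] [CompleteSpace E] {L σ₀ σ₁ Δ : ℝ} {g : E → ℝ} (hg : IsNonnegSmooth L g)
    (hσ₀ : 0 ≤ σ₀) (hσ₁ : 0 ≤ σ₁) (hΔ : 0 ≤ Δ) (x : E) : σ₀ * ‖gradient g x‖ ^ 2 + σ₁ + 1 ≤
      (4 * L * σ₀ * (1 + Δ) + σ₁ + 1) * (max (g x - Δ) 0 + 1) := by
  have hL := hg.L_pos
  have hgradient := mul_le_mul_of_nonneg_left (hg.norm_gradient_sq_le x) hσ₀
  have hvalue := mul_le_mul_of_nonneg_left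
    (sub_le_iff_le_add.1 (le_max_left (g x - Δ) 0)) (show 0 ≤ σ₀ * (4 * L) by positivity)
  have hw : 0 ≤ max (g x - Δ) 0 := le_max_right _ _
  set w := max (g x - Δ) 0
  linarith [show 0 ≤ 4 * L * σ₀ * (Δ * w) by positivity, show 0 ≤ σ₁ * w by positivity,
    show 0 ≤ 4 * L * σ₀ by positivity]

namespace AdaGradNormPath

variable {E : Type*} [NormedAddCommGroup E] [InnerProductSpace ℝ E]
  {α₀ L σ₀ σ₁ : ℝ} {g : E → ℝ} {G θ : ℕ → E} {S : ℕ → ℝ} (h : AdaGradNormPath α₀ G θ S)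
include h

theorem neg_mul_rate_succ_sq_mul_inner_le (c : ℝ) (v : E) (n : ℕ) :
    -(2 * c * (√(S (n + 1)))⁻¹ ^ 2 * inner ℝ v (G n)) ≤
      (√(S n))⁻¹ * ‖v‖ ^ 2 / 4 + 8 * c ^ 2 * ((√(S n))⁻¹ - (√(S (n + 1)))⁻¹) := by
  have hcube := h.rate_succ_cube_mul_le n
  have hba := h.rate_succ_le n
  have hb := h.rate_pos (n + 1)
  set a := (√(S n))⁻¹
  set b := (√(S (n + 1)))⁻¹
  calc -(2 * c * b ^ 2 * inner ℝ v (G n)) = b * -(2 * c * b * inner ℝ v (G n)) := by ring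
    _ ≤ b * (‖v‖ ^ 2 / 4 + (2 * c * b) ^ 2 * ‖G n‖ ^ 2) := by gcongr; exact neg_mul_inner_le _ _ _
    _ = b * ‖v‖ ^ 2 / 4 + 4 * c ^ 2 * (b ^ 3 * ‖G n‖ ^ 2) := by ring
    _ ≤ a * ‖v‖ ^ 2 / 4 + 4 * c ^ 2 * (2 * (a - b)) := by gcongr
    _ = _ := by ring

variable [CompleteSpace E]

theorem sq_mul_one_add_rate_succ_le (hσ₀ : 0 ≤ σ₀) (hσ₁ : 0 ≤ σ₁) {w w' c K Q ρ s : ℝ} {n : ℕ}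
    (hw : 0 ≤ w) (hc : 0 ≤ c) (hK : 0 ≤ K) (hs : 0 < s) (hKs : K * ρ * s = α₀ / 2)
    (hρ : 1 ≤ ρ * gradientWeight σ₀ σ₁ (gradient g (θ n)))
    (hmoment : σ₀ * ‖gradient g (θ n)‖ ^ 2 + σ₁ + 1 ≤ Q * (w + 1))
    (hstep : w' ^ 2 ≤ w ^ 2 - 2 * α₀ * w * ((√(S (n + 1)))⁻¹ * inner ℝ (gradient g (θ n)) (G n))
      + K * (w + 1) * ((√(S (n + 1)))⁻¹ ^ 2 * ‖G n‖ ^ 2)) :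
    w' ^ 2 * (1 + c * (√(S (n + 1)))⁻¹) ≤ w ^ 2 * (1 + c * (√(S (n + 1)))⁻¹)
      - 2 * α₀ * ((√(S n))⁻¹ * w) * inner ℝ (gradient g (θ n)) (G n)
      + (3 / 2 * α₀ * ((√(S n))⁻¹ * w) + K * ρ * (√(S n))⁻¹ ^ 2)
        * (gradientWeight σ₀ σ₁ (gradient g (θ n)) * ‖G n‖ ^ 2)
      + α₀ / 4 * ((√(S n))⁻¹ * w) * ‖gradient g (θ n)‖ ^ 2
      + (α₀ * Q * (w ^ 2 + w) + 8 * α₀ * c ^ 2 * w + 2 * c * K * (w + 1) + K / s * w)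
        * ((√(S n))⁻¹ - (√(S (n + 1)))⁻¹) := by
  have hα := h.α₀_pos
  have ha := h.rate_pos n
  have hb := h.rate_pos (n + 1)
  have hD := sub_nonneg.2 (h.rate_succ_le n)
  have hcube := h.rate_succ_cube_mul_le n
  have hsquare := h.rate_succ_sq_mul_le_add hs n
  have hsquare' := h.rate_succ_sq_mul_le n
  have hcross := h.neg_mul_rate_succ_sq_mul_inner_le c (gradient g (θ n)) n
  have hlag := mul_inner_le_gradientWeight hσ₀ hσ₁ hD (sub_le_self _ hb.le) (gradient g (θ n)) (G n)
  have hweight := mul_le_mul_of_nonneg_right hρ (sq_nonneg ‖G n‖)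
  set a := (√(S n))⁻¹
  set b := (√(S (n + 1)))⁻¹
  linear_combination
    mul_le_mul_of_nonneg_left hstep (show 0 ≤ 1 + c * b by positivity)
    + mul_le_mul_of_nonneg_left hlag (show 0 ≤ 2 * α₀ * w by positivity)
    + mul_le_mul_of_nonneg_left hmoment (show 0 ≤ α₀ * w * (a - b) by positivity)
    + mul_le_mul_of_nonneg_left hcross (show 0 ≤ α₀ * w by positivity)
    + mul_le_mul_of_nonneg_left hsquare (show 0 ≤ K * w by positivity)
    + mul_le_mul_of_nonneg_left hsquare' hK
    + mul_le_mul_of_nonneg_left hcube (show 0 ≤ c * K * (w + 1) by positivity)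
    + mul_le_mul_of_nonneg_left hweight (show 0 ≤ K * a ^ 2 + K * w * s * a by positivity)
    + a * w * (gradientWeight σ₀ σ₁ (gradient g (θ n)) * ‖G n‖ ^ 2) * hKs

theorem sq_posPart_succ_le (hg : IsNonnegSmooth L g) {Δ : ℝ} (hΔ : 0 ≤ Δ) (n : ℕ) :
    max (g (θ (n + 1)) - Δ) 0 ^ 2 ≤ max (g (θ n) - Δ) 0 ^ 2
      - 2 * α₀ * max (g (θ n) - Δ) 0 * ((√(S (n + 1)))⁻¹ * inner ℝ (gradient g (θ n)) (G n))
      + (10 * L + 8 * L * Δ + 2 * L ^ 2 * α₀ ^ 2) * α₀ ^ 2 * (max (g (θ n) - Δ) 0 + 1)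
        * ((√(S (n + 1)))⁻¹ ^ 2 * ‖G n‖ ^ 2) := by
  have hstep := hg.sq_posPart_add_le hΔ (θ n) (h.norm_step_le n)
  rw [← h.θ_succ_eq_add, h.norm_step, inner_neg_right, inner_smul_right] at hstep
  linarith

theorem lyapunov_sq_succ_le (hg : IsNonnegSmooth L g) (hσ₀ : 0 ≤ σ₀) (hσ₁ : 0 ≤ σ₁)
    {Δ η K ρ s Q c κ : ℝ} (hΔ : 0 ≤ Δ) (hη : 0 < η)
    (hlevel : ∀ x u, ‖gradient g x‖ < η → ‖u‖ ≤ α₀ → g x ≤ Δ ∧ g (x + u) ≤ Δ)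
    (hK : K = (10 * L + 8 * L * Δ + 2 * L ^ 2 * α₀ ^ 2) * α₀ ^ 2)
    (hρ : ρ = σ₀ + (σ₁ + 1) / η ^ 2) (hs : 0 < s) (hKs : K * ρ * s = α₀ / 2)
    (hQ : Q = 4 * L * σ₀ * (1 + Δ) + σ₁ + 1) (hc : c = α₀ * Q + 1)
    (hκ : κ = α₀ * Q + 8 * α₀ * c ^ 2 + 2 * c * K + K / s) (n : ℕ) :
    max (g (θ (n + 1)) - Δ) 0 ^ 2 * (1 + c * (√(S (n + 1)))⁻¹)
        + (κ ^ 2 + 2 * c * K) * (√(S (n + 1)))⁻¹ ≤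
      max (g (θ n) - Δ) 0 ^ 2 * (1 + c * (√(S n))⁻¹) + (κ ^ 2 + 2 * c * K) * (√(S n))⁻¹
      - 2 * α₀ * ((√(S n))⁻¹ * max (g (θ n) - Δ) 0) * inner ℝ (gradient g (θ n)) (G n)
      + (3 / 2 * α₀ * ((√(S n))⁻¹ * max (g (θ n) - Δ) 0) + K * ρ * (√(S n))⁻¹ ^ 2)
        * (gradientWeight σ₀ σ₁ (gradient g (θ n)) * ‖G n‖ ^ 2)
      + α₀ / 4 * ((√(S n))⁻¹ * max (g (θ n) - Δ) 0) * ‖gradient g (θ n)‖ ^ 2 := by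
  have hα := h.α₀_pos
  have hL := hg.L_pos
  have hK_nonneg : 0 ≤ K := by rw [hK]; positivity
  have hρ_nonneg : 0 ≤ ρ := by rw [hρ]; positivity
  have hc_nonneg : 0 ≤ c := by rw [hc, hQ]; positivity
  have hba := h.rate_succ_le n
  rcases lt_or_ge ‖gradient g (θ n)‖ η with hsmall | hlarge
  · obtain ⟨hvalue, hvalue'⟩ := hlevel (θ n) _ hsmall (h.norm_step_le n)
    rw [← h.θ_succ_eq_add] at hvalue'
    have hweight := gradientWeight_nonneg hσ₀ hσ₁ (gradient g (θ n))
    rw [max_eq_right (sub_nonpos.2 hvalue), max_eq_right (sub_nonpos.2 hvalue')]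
    linarith [mul_le_mul_of_nonneg_left hba (show 0 ≤ κ ^ 2 + 2 * c * K by positivity),
      show 0 ≤ K * ρ * (√(S n))⁻¹ ^ 2 *
        (gradientWeight σ₀ σ₁ (gradient g (θ n)) * ‖G n‖ ^ 2) by positivity]
  · have hcoefficient := h.sq_mul_one_add_rate_succ_le hσ₀ hσ₁ (le_max_right _ _) hc_nonneg
      hK_nonneg hs hKs (hρ ▸ one_le_mul_gradientWeight hσ₀ hσ₁ hη hlarge)
      (hQ ▸ hg.mul_norm_gradient_sq_add_le hσ₀ hσ₁ hΔ (θ n)) (hK ▸ h.sq_posPart_succ_le hg hΔ n)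
    set w := max (g (θ n) - Δ) 0
    have habsorb : κ * w - w ^ 2 ≤ κ ^ 2 := by nlinarith [sq_nonneg (w - κ / 2), sq_nonneg κ]
    linear_combination hcoefficient + mul_le_mul_of_nonneg_right habsorb (sub_nonneg.2 hba)
      - w * ((√(S n))⁻¹ - (√(S (n + 1)))⁻¹) * hκ - w ^ 2 * ((√(S n))⁻¹ - (√(S (n + 1)))⁻¹) * hc

end AdaGradNormPath

theorem IsNonnegSmooth.exists_lyapunov_sq_succ_le {E : Type*} [NormedAddCommGroup E]
    [InnerProductSpace ℝ E] [CompleteSpace E] {α₀ L σ₀ σ₁ Δ η : ℝ} {g : E → ℝ}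
    (hg : IsNonnegSmooth L g) (hσ₀ : 0 ≤ σ₀) (hσ₁ : 0 ≤ σ₁) (hα₀ : 0 < α₀) (hΔ : 0 ≤ Δ) (hη : 0 < η)
    (hlevel : ∀ x u, ‖gradient g x‖ < η → ‖u‖ ≤ α₀ → g x ≤ Δ ∧ g (x + u) ≤ Δ) :
    ∃ c C D, 0 ≤ c ∧ 0 ≤ C ∧ 0 ≤ D ∧
      ∀ (G θ : ℕ → E) (S : ℕ → ℝ), AdaGradNormPath α₀ G θ S → ∀ n,
        max (g (θ (n + 1)) - Δ) 0 ^ 2 * (1 + c * (√(S (n + 1)))⁻¹) + C * (√(S (n + 1)))⁻¹ ≤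
          max (g (θ n) - Δ) 0 ^ 2 * (1 + c * (√(S n))⁻¹) + C * (√(S n))⁻¹
          - 2 * α₀ * ((√(S n))⁻¹ * max (g (θ n) - Δ) 0) * inner ℝ (gradient g (θ n)) (G n)
          + (3 / 2 * α₀ * ((√(S n))⁻¹ * max (g (θ n) - Δ) 0) + D * (√(S n))⁻¹ ^ 2)
            * (gradientWeight σ₀ σ₁ (gradient g (θ n)) * ‖G n‖ ^ 2)
          + α₀ / 4 * ((√(S n))⁻¹ * max (g (θ n) - Δ) 0) * ‖gradient g (θ n)‖ ^ 2 := by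
  have hL := hg.L_pos
  obtain ⟨K, hK⟩ : ∃ K, K = (10 * L + 8 * L * Δ + 2 * L ^ 2 * α₀ ^ 2) * α₀ ^ 2 := ⟨_, rfl⟩
  obtain ⟨ρ, hρ⟩ : ∃ ρ, ρ = σ₀ + (σ₁ + 1) / η ^ 2 := ⟨_, rfl⟩
  obtain ⟨c, hc⟩ : ∃ c, c = α₀ * (4 * L * σ₀ * (1 + Δ) + σ₁ + 1) + 1 := ⟨_, rfl⟩
  have hK_pos : 0 < K := by rw [hK]; positivity
  have hρ_pos : 0 < ρ := by rw [hρ]; positivity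
  have hc_pos : 0 < c := by rw [hc]; positivity
  exact ⟨c, _, K * ρ, hc_pos.le, by positivity, by positivity, fun G θ S h =>
    h.lyapunov_sq_succ_le hg hσ₀ hσ₁ hΔ hη hlevel hK hρ (s := α₀ / (2 * (K * ρ))) (by positivity)
      (by field_simp) rfl hc rfl⟩

theorem le_add_mul_sum_range {F f : ℕ → ℝ} {κ : ℝ} (hF : ∀ n, F (n + 1) ≤ F n + κ * f n) (n : ℕ) :
    F n ≤ F 0 + κ * ∑ k ∈ Finset.range n, f k := by
  induction n with
  | zero => simp
  | succ n ih =>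
    rw [Finset.sum_range_succ, mul_add]
    linarith [hF n]

theorem le_add_mul_tsum {F f : ℕ → ℝ} {κ : ℝ} (hκ : 0 ≤ κ) (hf_nonneg : ∀ n, 0 ≤ f n)
    (hf : Summable f) (hF : ∀ n, F (n + 1) ≤ F n + κ * f n) (n : ℕ) :
    F n ≤ F 0 + κ * ∑' k, f k := by
  refine (le_add_mul_sum_range hF n).trans ?_
  gcongr
  exact hf.sum_le_tsum _ fun k _ => hf_nonneg k

theorem sq_le_two_mul_posPart_sub_sq_add {x : ℝ} (hx : 0 ≤ x) (Δ : ℝ) :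
    x ^ 2 ≤ 2 * max (x - Δ) 0 ^ 2 + 2 * Δ ^ 2 := by
  have hle := pow_le_pow_left₀ hx (sub_le_iff_le_add.1 (le_max_left (x - Δ) 0)) 2
  linarith [sq_nonneg (max (x - Δ) 0 - Δ)]

/-- The AdaGrad-Norm process: conditionally on `ℱ n`, each `G n` is an unbiased estimator of
`gradient g (θ n)` with affine variance. Indices start at `0` as in `AdaGradNormPath`; the initial
point may be random but is bounded by `R`, and the initial value of `S` is at least `S₀`. -/
structure AdaGradNormProcess {E Ω : Type*} [NormedAddCommGroup E] [InnerProductSpace ℝ E]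
    [FiniteDimensional ℝ E] {m0 : MeasurableSpace Ω} (P : Measure Ω) (ℱ : Filtration ℕ m0)
    (g : E → ℝ) (σ₀ σ₁ α₀ S₀ R : ℝ) (G θ : ℕ → Ω → E) (S : ℕ → Ω → ℝ) : Prop where
  α₀_pos : 0 < α₀
  S₀_pos : 0 < S₀
  σ₀_nonneg : 0 ≤ σ₀
  σ₁_nonneg : 0 ≤ σ₁
  norm_θ_zero_le : ∀ ω, ‖θ 0 ω‖ ≤ R
  le_S_zero : ∀ ω, S₀ ≤ S 0 ω
  measurable_S_zero : StronglyMeasurable[ℱ 0] (S 0)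
  S_succ : ∀ n ω, S (n + 1) ω = S n ω + ‖G n ω‖ ^ 2
  θ_succ : ∀ n ω, θ (n + 1) ω = θ n ω - (α₀ / √(S (n + 1) ω)) • G n ω
  measurable_θ : ∀ n, StronglyMeasurable[ℱ n] (θ n)
  measurable_G : ∀ n, StronglyMeasurable[ℱ (n + 1)] (G n)
  integrable_G : ∀ n, Integrable (G n) P
  integrable_sq : ∀ n, Integrable (fun ω => ‖G n ω‖ ^ 2) P
  unbiased : ∀ n, P[G n | ℱ n] =ᵐ[P] fun ω => gradient g (θ n ω)
  variance : ∀ n, ∀ᵐ ω ∂P,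
    (P[fun ω => ‖G n ω‖ ^ 2 | ℱ n]) ω ≤ σ₀ * ‖gradient g (θ n ω)‖ ^ 2 + σ₁

namespace AdaGradNormProcess

variable {E Ω : Type*} [NormedAddCommGroup E] [InnerProductSpace ℝ E] [FiniteDimensional ℝ E]
  {m0 : MeasurableSpace Ω} {P : Measure Ω} {ℱ : Filtration ℕ m0} {g : E → ℝ}
  {L σ₀ σ₁ α₀ S₀ R : ℝ} {G θ : ℕ → Ω → E} {S : ℕ → Ω → ℝ}

section Integrability

variable {F : Type*} (h : AdaGradNormProcess P ℱ g σ₀ σ₁ α₀ S₀ R G θ S)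
include h

theorem path (ω : Ω) : AdaGradNormPath α₀ (G · ω) (θ · ω) (S · ω) where
  α₀_pos := h.α₀_pos
  S_zero_pos := h.S₀_pos.trans_le (h.le_S_zero ω)
  S_succ n := h.S_succ n ω
  θ_succ n := h.θ_succ n ω

theorem rate_zero_le (ω : Ω) : (√(S 0 ω))⁻¹ ≤ (√S₀)⁻¹ :=
  inv_anti₀ (Real.sqrt_pos.2 h.S₀_pos) (Real.sqrt_le_sqrt (h.le_S_zero ω))

theorem measurable_S (n : ℕ) : StronglyMeasurable[ℱ n] (S n) := by
  induction n with
  | zero => exact h.measurable_S_zero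
  | succ n ih =>
    rw [funext (h.S_succ n)]
    exact (ih.mono (ℱ.mono n.le_succ)).add ((h.measurable_G n).norm.pow 2)

theorem stronglyMeasurable [TopologicalSpace F] {Φ : E × ℝ → F} (hΦ : Continuous Φ) (n : ℕ) :
    StronglyMeasurable[ℱ n] fun ω => Φ (θ n ω, (√(S n ω))⁻¹) :=
  hΦ.comp_stronglyMeasurable ((h.measurable_θ n).prodMk
    (Real.continuous_sqrt.comp_stronglyMeasurable (h.measurable_S n)).inv₀)

variable [NormedAddCommGroup F]

theorem exists_norm_le {Φ : E × ℝ → F} (hΦ : Continuous Φ) (n : ℕ) :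
    ∃ C, ∀ ω, ‖Φ (θ n ω, (√(S n ω))⁻¹)‖ ≤ C := by
  have : ProperSpace E := FiniteDimensional.proper ℝ E
  obtain ⟨C, hC⟩ := ((isCompact_closedBall (0 : E) (R + n * α₀)).prod
    (isCompact_Icc (a := 0) (b := (√S₀)⁻¹))).exists_bound_of_continuousOn hΦ.continuousOn
  refine ⟨C, fun ω => hC _ ⟨?_, ((h.path ω).rate_pos n).le, ?_⟩⟩
  · exact mem_closedBall_zero_iff.2 (((h.path ω).norm_le n).trans
      (add_le_add_left (h.norm_θ_zero_le ω) _))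
  · exact ((h.path ω).antitone_rate n.zero_le).trans (h.rate_zero_le ω)

theorem integrable [IsFiniteMeasure P] {Φ : E × ℝ → F} (hΦ : Continuous Φ) (n : ℕ) :
    Integrable (fun ω => Φ (θ n ω, (√(S n ω))⁻¹)) P := by
  obtain ⟨C, hC⟩ := h.exists_norm_le hΦ n
  exact Integrable.of_bound ((h.stronglyMeasurable hΦ n).mono (ℱ.le n)).aestronglyMeasurable C
    (ae_of_all _ hC)

theorem integrable_inner {Φ : E × ℝ → E} (hΦ : Continuous Φ) (n : ℕ) :
    Integrable (fun ω => inner ℝ (Φ (θ n ω, (√(S n ω))⁻¹)) (G n ω)) P := by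
  obtain ⟨C, hC⟩ := h.exists_norm_le hΦ n
  refine ((h.integrable_G n).norm.const_mul C).mono'
    ((((h.stronglyMeasurable hΦ n).mono (ℱ.le n)).inner
      ((h.measurable_G n).mono (ℱ.le _))).aestronglyMeasurable) (ae_of_all _ fun ω => ?_)
  exact (norm_inner_le_norm _ _).trans (mul_le_mul_of_nonneg_right (hC ω) (norm_nonneg _))

theorem integrable_mul_sq {Φ : E × ℝ → ℝ} (hΦ : Continuous Φ) (n : ℕ) :
    Integrable (fun ω => Φ (θ n ω, (√(S n ω))⁻¹) * ‖G n ω‖ ^ 2) P := by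
  obtain ⟨C, hC⟩ := h.exists_norm_le hΦ n
  exact (h.integrable_sq n).bdd_mul
    ((h.stronglyMeasurable hΦ n).mono (ℱ.le n)).aestronglyMeasurable (ae_of_all _ hC)

end Integrability

section CondExp

variable (h : AdaGradNormProcess P ℱ g σ₀ σ₁ α₀ S₀ R G θ S)
include h

theorem condExp_inner {Φ : E × ℝ → E} (hΦ : Continuous Φ) (n : ℕ) :
    P[fun ω => inner ℝ (Φ (θ n ω, (√(S n ω))⁻¹)) (G n ω) | ℱ n] =ᵐ[P]
      fun ω => inner ℝ (Φ (θ n ω, (√(S n ω))⁻¹)) (gradient g (θ n ω)) := by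
  filter_upwards [condExp_bilin_of_stronglyMeasurable_left (m := ℱ n) (innerSL ℝ (E := E))
    (h.stronglyMeasurable hΦ n) (h.integrable_inner hΦ n) (h.integrable_G n), h.unbiased n]
    with ω hpullout hunbiased
  rw [hunbiased] at hpullout
  exact hpullout

variable [IsFiniteMeasure P]

theorem integral_inner {Φ : E × ℝ → E} (hΦ : Continuous Φ) (n : ℕ) :
    ∫ ω, inner ℝ (Φ (θ n ω, (√(S n ω))⁻¹)) (G n ω) ∂P =
      ∫ ω, inner ℝ (Φ (θ n ω, (√(S n ω))⁻¹)) (gradient g (θ n ω)) ∂P := by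
  rw [← integral_condExp (ℱ.le n)]
  exact integral_congr_ae (h.condExp_inner hΦ n)

theorem integral_mul_sq_le (hgrad : Continuous (gradient g)) {Φ : E × ℝ → ℝ} (hΦ : Continuous Φ)
    (hΦ_nonneg : ∀ x a, 0 < a → 0 ≤ Φ (x, a)) (n : ℕ) :
    ∫ ω, Φ (θ n ω, (√(S n ω))⁻¹) * ‖G n ω‖ ^ 2 ∂P ≤
      ∫ ω, Φ (θ n ω, (√(S n ω))⁻¹) * (σ₀ * ‖gradient g (θ n ω)‖ ^ 2 + σ₁) ∂P := by
  rw [← integral_condExp (ℱ.le n)]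
  refine integral_mono_ae integrable_condExp
    (h.integrable (Φ := fun p => Φ p * (σ₀ * ‖gradient g p.1‖ ^ 2 + σ₁)) (by fun_prop) n) ?_
  filter_upwards [h.variance n, condExp_mul_of_stronglyMeasurable_left
    (h.stronglyMeasurable hΦ n) (h.integrable_mul_sq hΦ n) (h.integrable_sq n)]
    with ω hvariance hpullout
  exact hpullout.le.trans
    (mul_le_mul_of_nonneg_left hvariance (hΦ_nonneg _ _ ((h.path ω).rate_pos n)))

theorem integral_gradientWeight_mul_sq_le (hgrad : Continuous (gradient g)) {Φ : E × ℝ → ℝ}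
    (hΦ : Continuous Φ) (hΦ_nonneg : ∀ x a, 0 < a → 0 ≤ Φ (x, a)) (n : ℕ) :
    ∫ ω, Φ (θ n ω, (√(S n ω))⁻¹) * (gradientWeight σ₀ σ₁ (gradient g (θ n ω)) * ‖G n ω‖ ^ 2) ∂P ≤
      ∫ ω, Φ (θ n ω, (√(S n ω))⁻¹) * ‖gradient g (θ n ω)‖ ^ 2 ∂P := by
  have hσ₀ := h.σ₀_nonneg
  have hσ₁ := h.σ₁_nonneg
  have hweight : Continuous fun p : E × ℝ => gradientWeight σ₀ σ₁ (gradient g p.1) :=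
    (continuous_gradientWeight hσ₀ hσ₁).comp (hgrad.comp continuous_fst)
  simp only [← mul_assoc]
  refine (h.integral_mul_sq_le hgrad (Φ := fun p => Φ p * gradientWeight σ₀ σ₁ (gradient g p.1))
    (by fun_prop) (fun x a ha => mul_nonneg (hΦ_nonneg x a ha)
      (gradientWeight_nonneg hσ₀ hσ₁ _)) n).trans (integral_mono
      (h.integrable (Φ := fun p => Φ p * gradientWeight σ₀ σ₁ (gradient g p.1) *
        (σ₀ * ‖gradient g p.1‖ ^ 2 + σ₁)) (by fun_prop) n)
      (h.integrable (Φ := fun p => Φ p * ‖gradient g p.1‖ ^ 2) (by fun_prop) n) fun ω => ?_)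
  simp only [mul_assoc]
  exact mul_le_mul_of_nonneg_left (gradientWeight_mul_le hσ₀ hσ₁ (gradient g (θ n ω)))
    (hΦ_nonneg _ _ ((h.path ω).rate_pos n))

end CondExp

section Lyapunov

variable [IsFiniteMeasure P] (h : AdaGradNormProcess P ℱ g σ₀ σ₁ α₀ S₀ R G θ S)
include h

theorem integral_lyapunov_succ_le (hgrad : Continuous (gradient g)) {Ψ φ u r : E × ℝ → ℝ} {κ : ℝ}
    (hΨ : Continuous Ψ) (hφ : Continuous φ) (hu : Continuous u) (hr : Continuous r)
    (hu_nonneg : ∀ x a, 0 < a → 0 ≤ u (x, a))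
    (hκ : ∀ x a, 0 < a → u (x, a) + r (x, a) - φ (x, a) ≤ κ * a ^ 2) (n : ℕ)
    (hstep : ∀ ω, Ψ (θ (n + 1) ω, (√(S (n + 1) ω))⁻¹) ≤ Ψ (θ n ω, (√(S n ω))⁻¹)
      - φ (θ n ω, (√(S n ω))⁻¹) * inner ℝ (gradient g (θ n ω)) (G n ω)
      + u (θ n ω, (√(S n ω))⁻¹) * (gradientWeight σ₀ σ₁ (gradient g (θ n ω)) * ‖G n ω‖ ^ 2)
      + r (θ n ω, (√(S n ω))⁻¹) * ‖gradient g (θ n ω)‖ ^ 2) :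
    ∫ ω, Ψ (θ (n + 1) ω, (√(S (n + 1) ω))⁻¹) ∂P ≤ ∫ ω, Ψ (θ n ω, (√(S n ω))⁻¹) ∂P
      + κ * ∫ ω, (√(S n ω))⁻¹ ^ 2 * ‖gradient g (θ n ω)‖ ^ 2 ∂P := by
  have hweight : Continuous fun p : E × ℝ => gradientWeight σ₀ σ₁ (gradient g p.1) :=
    (continuous_gradientWeight h.σ₀_nonneg h.σ₁_nonneg).comp (hgrad.comp continuous_fst)
  have hΨ_int := h.integrable hΨ n
  have hφ_int := h.integrable_inner (Φ := fun p => φ p • gradient g p.1) (by fun_prop) n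
  have hu_int := h.integrable_mul_sq (Φ := fun p => u p * gradientWeight σ₀ σ₁ (gradient g p.1))
    (by fun_prop) n
  have hr_int := h.integrable (Φ := fun p => r p * ‖gradient g p.1‖ ^ 2) (by fun_prop) n
  have hu_int' := h.integrable (Φ := fun p => u p * ‖gradient g p.1‖ ^ 2) (by fun_prop) n
  have hφ_int' := h.integrable (Φ := fun p => φ p * ‖gradient g p.1‖ ^ 2) (by fun_prop) n
  have hφ_eq := h.integral_inner (Φ := fun p => φ p • gradient g p.1) (by fun_prop) n
  have hu_le := h.integral_gradientWeight_mul_sq_le hgrad hu hu_nonneg n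
  simp only [real_inner_smul_left, real_inner_self_eq_norm_sq] at hφ_int hφ_eq
  simp only [mul_assoc] at hu_int
  have hdescent := integral_mono (h.integrable hΨ (n + 1))
    (((hΨ_int.sub hφ_int).add hu_int).add hr_int) hstep
  rw [integral_add' ((hΨ_int.sub hφ_int).add hu_int) hr_int,
    integral_add' (hΨ_int.sub hφ_int) hu_int, integral_sub' hΨ_int hφ_int, hφ_eq] at hdescent
  have hbalance := integral_mono ((hu_int'.add hr_int).sub hφ_int')
    (h.integrable (Φ := fun p => κ * (p.2 ^ 2 * ‖gradient g p.1‖ ^ 2)) (by fun_prop) n) fun ω => by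
      have hcoefficient := mul_le_mul_of_nonneg_right (hκ (θ n ω) _ ((h.path ω).rate_pos n))
        (sq_nonneg ‖gradient g (θ n ω)‖)
      simp only [Pi.add_apply, Pi.sub_apply]
      linarith
  rw [integral_sub' (hu_int'.add hr_int) hφ_int', integral_add' hu_int' hr_int,
    integral_const_mul] at hbalance
  linarith

variable (hg : IsNonnegSmooth L g)
include hg

theorem summable_integral_gradient_sq :
    Summable fun n => ∫ ω, (√(S n ω))⁻¹ ^ 2 * ‖gradient g (θ n ω)‖ ^ 2 ∂P := by
  have hgrad := hg.continuous_gradient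
  have hvalue := hg.differentiable.continuous
  have hα := h.α₀_pos
  have hL := hg.L_pos
  have hσ₀ := h.σ₀_nonneg
  have hσ₁ := h.σ₁_nonneg
  obtain ⟨c, hc⟩ : ∃ c, c = 2 * α₀ * L * σ₀ := ⟨_, rfl⟩
  obtain ⟨C, hC⟩ : ∃ C, C = 2 * L * α₀ ^ 2 +
    2 * (√S₀)⁻¹ * (c * L * α₀ ^ 2 + α₀ * c ^ 2 + α₀ / 2 * (σ₁ + 1)) := ⟨_, rfl⟩
  have hc_nonneg : 0 ≤ c := by rw [hc]; positivity
  have hC_nonneg : 0 ≤ C := by rw [hC]; positivity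
  set V : E × ℝ → ℝ := fun p => g p.1 * (p.2 + c * p.2 ^ 2) + C * p.2 with hV
  have hdecrease_succ n := h.integral_lyapunov_succ_le hgrad (Ψ := V) (κ := -(α₀ / 4))
    (φ := fun p => α₀ * p.2 ^ 2) (u := fun p => α₀ / 2 * p.2 ^ 2) (r := fun p => α₀ / 4 * p.2 ^ 2)
    (by fun_prop) (by fun_prop) (by fun_prop) (by fun_prop) (fun x a _ => by positivity)
    (fun x a _ => by linarith) n
    fun ω => (h.path ω).lyapunov_value_succ_le hg hσ₀ hσ₁ (h.rate_zero_le ω) hc hC n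
  have hdecrease := le_add_mul_sum_range (F := fun n => ∫ ω, V (θ n ω, (√(S n ω))⁻¹) ∂P)
    hdecrease_succ
  refine summable_of_sum_range_le (c := (∫ ω, V (θ 0 ω, (√(S 0 ω))⁻¹) ∂P) / (α₀ / 4))
    (fun n => integral_nonneg fun ω => by positivity) fun n => ?_
  have hV_nonneg : 0 ≤ ∫ ω, V (θ n ω, (√(S n ω))⁻¹) ∂P := integral_nonneg fun ω => by
    have hg_nonneg := hg.nonneg (θ n ω)
    have hrate := (h.path ω).rate_pos n
    simp only [hV, Pi.zero_apply]
    positivity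
  rw [le_div_iff₀' (by positivity)]
  linarith [hdecrease n]

theorem exists_integral_value_sq_le {η : ℝ} (hη : 0 < η)
    (hflat : ∀ᶠ x in Bornology.cobounded E, η < ‖gradient g x‖) :
    ∃ C, ∀ n, ∫ ω, g (θ n ω) ^ 2 ∂P ≤ C := by
  have hgrad := hg.continuous_gradient
  have hvalue := hg.differentiable.continuous
  have hα := h.α₀_pos
  obtain ⟨Δ, hΔ, hlevel⟩ := exists_level_of_norm_gradient_lt hvalue hflat α₀
  obtain ⟨c, C, D, hc, hC, hD, hlyapunov⟩ := hg.exists_lyapunov_sq_succ_le h.σ₀_nonneg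
    h.σ₁_nonneg hα hΔ hη hlevel
  set Z : E × ℝ → ℝ := fun p => max (g p.1 - Δ) 0 ^ 2 * (1 + c * p.2) + C * p.2 with hZ
  have hZ_cont : Continuous Z := by fun_prop
  have hgrowth_succ n := h.integral_lyapunov_succ_le hgrad (Ψ := Z) (κ := D)
    (φ := fun p => 2 * α₀ * (p.2 * max (g p.1 - Δ) 0))
    (u := fun p => 3 / 2 * α₀ * (p.2 * max (g p.1 - Δ) 0) + D * p.2 ^ 2)
    (r := fun p => α₀ / 4 * (p.2 * max (g p.1 - Δ) 0))
    hZ_cont (by fun_prop) (by fun_prop) (by fun_prop) (fun x a _ => by positivity)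
    (fun x a _ => by
      linarith [show 0 ≤ α₀ * (a * max (g x - Δ) 0) by positivity])
    n fun ω => hlyapunov _ _ _ (h.path ω) n
  have hgrowth := le_add_mul_tsum (F := fun n => ∫ ω, Z (θ n ω, (√(S n ω))⁻¹) ∂P) hD
    (fun n => integral_nonneg fun ω => by positivity) (h.summable_integral_gradient_sq hg)
    hgrowth_succ
  have hvalue_sq_le : ∀ x a, 0 < a → g x ^ 2 ≤ 2 * Z (x, a) + 2 * Δ ^ 2 := by
    intro x a ha
    simp only [hZ]
    linarith [sq_le_two_mul_posPart_sub_sq_add (hg.nonneg x) Δ,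
      show 0 ≤ max (g x - Δ) 0 ^ 2 * (c * a) by positivity, show 0 ≤ C * a by positivity]
  refine ⟨2 * (∫ ω, Z (θ 0 ω, (√(S 0 ω))⁻¹) ∂P + D * ∑' k,
    ∫ ω, (√(S k ω))⁻¹ ^ 2 * ‖gradient g (θ k ω)‖ ^ 2 ∂P) + P.real Set.univ * (2 * Δ ^ 2),
    fun n => ?_⟩
  calc ∫ ω, g (θ n ω) ^ 2 ∂P ≤ ∫ ω, (2 * Z (θ n ω, (√(S n ω))⁻¹) + 2 * Δ ^ 2) ∂P :=
        integral_mono (h.integrable (Φ := fun p => g p.1 ^ 2) (by fun_prop) n)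
          (h.integrable (Φ := fun p => 2 * Z p + 2 * Δ ^ 2) (by fun_prop) n)
          fun ω => hvalue_sq_le _ _ ((h.path ω).rate_pos n)
    _ = 2 * ∫ ω, Z (θ n ω, (√(S n ω))⁻¹) ∂P + P.real Set.univ * (2 * Δ ^ 2) := by
        rw [integral_add ((h.integrable hZ_cont n).const_mul 2) (integrable_const _),
          integral_const_mul, integral_const, smul_eq_mul]
    _ ≤ _ := by
        gcongr
        exact hgrowth n

end Lyapunov

end AdaGradNormProcess

section Probability

variable {Ω : Type*} {m0 : MeasurableSpace Ω} {μ : Measure Ω} {f : ℕ → Ω → ℝ}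

theorem ae_summable_of_summable_integral (hf : ∀ n ω, 0 ≤ f n ω)
    (hf_int : ∀ n, Integrable (f n) μ) (hsum : Summable fun n => ∫ ω, f n ω ∂μ) :
    ∀ᵐ ω ∂μ, Summable fun n => f n ω := by
  have hmeas n : AEMeasurable (fun ω => ENNReal.ofReal (f n ω)) μ :=
    (hf_int n).aestronglyMeasurable.aemeasurable.ennreal_ofReal
  have hlintegral : ∫⁻ ω, ∑' n, ENNReal.ofReal (f n ω) ∂μ ≠ ⊤ := by
    rw [lintegral_tsum hmeas]
    simp_rw [← ofReal_integral_eq_lintegral_ofReal (hf_int _) (ae_of_all _ (hf _))]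
    exact hsum.tsum_ofReal_ne_top
  filter_upwards [ae_lt_top' (AEMeasurable.tsum hmeas) hlintegral] with ω hω
  exact (ENNReal.summable_toReal hω.ne).congr fun n => ENNReal.toReal_ofReal (hf n ω)

theorem ae_frequently_le_of_integral_le (hf : ∀ n ω, 0 ≤ f n ω) (hmeas : ∀ n, Measurable (f n))
    (hf_int : ∀ n, Integrable (f n) μ) {C : ℝ} (hC : ∀ n, ∫ ω, f n ω ∂μ ≤ C) :
    ∀ᵐ ω ∂μ, ∃ N, ∃ᶠ n in atTop, f n ω ≤ N := by
  have hmeas' n : Measurable fun ω => ENNReal.ofReal (f n ω) := (hmeas n).ennreal_ofReal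
  have hbound n : ∫⁻ ω, ENNReal.ofReal (f n ω) ∂μ ≤ ENNReal.ofReal C := by
    rw [← ofReal_integral_eq_lintegral_ofReal (hf_int n) (ae_of_all _ (hf n))]
    exact ENNReal.ofReal_le_ofReal (hC n)
  have hfatou : ∫⁻ ω, liminf (fun n => ENNReal.ofReal (f n ω)) atTop ∂μ ≤ ENNReal.ofReal C :=
    (lintegral_liminf_le hmeas').trans (liminf_le_of_frequently_le'
      (Eventually.of_forall hbound).frequently)
  filter_upwards [ae_lt_top (Measurable.liminf hmeas')
    (ne_top_of_le_ne_top ENNReal.ofReal_ne_top hfatou)] with ω hω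
  obtain ⟨r, hr, -⟩ := ENNReal.lt_iff_exists_nnreal_btwn.1 hω
  refine ⟨r, (frequently_lt_of_liminf_lt (by isBoundedDefault) hr).mono fun n hn => ?_⟩
  exact (ENNReal.ofReal_le_iff_le_toReal ENNReal.coe_ne_top).1 hn.le

section Martingale

variable {ξ : ℕ → Ω → ℝ}

theorem integral_mul_eq_zero_of_condExp_eq_zero {m : MeasurableSpace Ω} (hm : m ≤ m0)
    [SigmaFinite (μ.trim hm)] {X Y : Ω → ℝ} (hX : StronglyMeasurable[m] X) (hY : Integrable Y μ)
    (hXY : Integrable (X * Y) μ) (hcond : μ[Y | m] =ᵐ[μ] 0) : ∫ ω, X ω * Y ω ∂μ = 0 := by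
  change ∫ ω, (X * Y) ω ∂μ = 0
  rw [← integral_condExp hm]
  refine integral_eq_zero_of_ae ?_
  filter_upwards [condExp_mul_of_stronglyMeasurable_left hX hXY hY, hcond] with ω hpullout hzero
  rw [hpullout, Pi.mul_apply, hzero, Pi.zero_apply, mul_zero]

variable [IsFiniteMeasure μ] {ℱ : Filtration ℕ m0}
  (hmeas : ∀ n, StronglyMeasurable[ℱ (n + 1)] (ξ n)) (hL2 : ∀ n, MemLp (ξ n) 2 μ)
  (hcond : ∀ n, μ[ξ n | ℱ n] =ᵐ[μ] 0)
include hmeas hL2 hcond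

theorem integral_sum_sq_of_condExp_eq_zero (n : ℕ) :
    ∫ ω, (∑ k ∈ Finset.range n, ξ k ω) ^ 2 ∂μ = ∑ k ∈ Finset.range n, ∫ ω, ξ k ω ^ 2 ∂μ := by
  induction n with
  | zero => simp
  | succ n ih =>
    have hsum_L2 : MemLp (fun ω => ∑ k ∈ Finset.range n, ξ k ω) 2 μ :=
      memLp_finsetSum _ fun k _ => hL2 k
    have hmul_int : Integrable (fun ω => (∑ k ∈ Finset.range n, ξ k ω) * ξ n ω) μ :=
      hsum_L2.integrable_mul (hL2 n)
    have horthogonal := integral_mul_eq_zero_of_condExp_eq_zero (ℱ.le n)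
      (Finset.stronglyMeasurable_fun_sum _ fun k hk =>
        (hmeas k).mono (ℱ.mono (Finset.mem_range.1 hk)))
      ((hL2 n).integrable one_le_two) hmul_int (hcond n)
    have hadd_int : Integrable (fun ω => (∑ k ∈ Finset.range n, ξ k ω) ^ 2 +
        2 * ((∑ k ∈ Finset.range n, ξ k ω) * ξ n ω)) μ :=
      hsum_L2.integrable_sq.add (hmul_int.const_mul 2)
    simp_rw [Finset.sum_range_succ, add_sq, mul_assoc (2 : ℝ)]
    rw [integral_add hadd_int (hL2 n).integrable_sq,
      integral_add hsum_L2.integrable_sq (hmul_int.const_mul 2), integral_const_mul, horthogonal,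
      mul_zero, add_zero, ih]

theorem ae_tendsto_sum_of_condExp_eq_zero (hsum : Summable fun n => ∫ ω, ξ n ω ^ 2 ∂μ) :
    ∀ᵐ ω ∂μ, ∃ l, Tendsto (fun n => ∑ k ∈ Finset.range n, ξ k ω) atTop (𝓝 l) := by
  set M : ℕ → Ω → ℝ := fun n ω => ∑ k ∈ Finset.range n, ξ k ω
  have hM_L2 n : MemLp (M n) 2 μ := memLp_finsetSum _ fun k _ => hL2 k
  have hM_int n : Integrable (M n) μ := (hM_L2 n).integrable one_le_two
  have hmartingale : Martingale M ℱ μ := by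
    refine martingale_of_condExp_sub_eq_zero_nat (fun n => ?_) hM_int fun n => ?_
    · exact Finset.stronglyMeasurable_fun_sum _ fun k hk =>
        (hmeas k).mono (ℱ.mono (Finset.mem_range.1 hk))
    · rw [show M (n + 1) = M n + ξ n from funext fun ω => Finset.sum_range_succ _ _,
        add_sub_cancel_left]
      exact hcond n
  refine hmartingale.submartingale.exists_ae_tendsto_of_bdd
    (R := (μ.real Set.univ + ∑' k, ∫ ω, ξ k ω ^ 2 ∂μ).toNNReal) fun n => ?_
  rw [eLpNorm_one_eq_lintegral_enorm, ← ofReal_integral_norm_eq_lintegral_enorm (hM_int n)]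
  refine ENNReal.ofReal_le_ofReal ?_
  calc ∫ ω, ‖M n ω‖ ∂μ ≤ ∫ ω, (1 + M n ω ^ 2) ∂μ := by
        refine integral_mono (hM_int n).norm ((integrable_const 1).add (hM_L2 n).integrable_sq)
          fun ω => ?_
        simp only [Real.norm_eq_abs]
        nlinarith [sq_abs (M n ω), sq_nonneg (|M n ω| - 1)]
    _ = μ.real Set.univ + ∑ k ∈ Finset.range n, ∫ ω, ξ k ω ^ 2 ∂μ := by
        rw [integral_add (integrable_const 1) (hM_L2 n).integrable_sq,
          integral_sum_sq_of_condExp_eq_zero hmeas hL2 hcond, integral_const, smul_eq_mul, mul_one]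
    _ ≤ _ := add_le_add_right
        (hsum.sum_le_tsum _ fun k _ => integral_nonneg fun ω => sq_nonneg _) _

end Martingale

section UniformIntegrability

variable [IsFiniteMeasure μ] (hf : ∀ n ω, 0 ≤ f n ω) (hf_int : ∀ n, Integrable (f n) μ)
include hf hf_int

theorem tendsto_integral_min_zero (hlim : ∀ᵐ ω ∂μ, Tendsto (fun n => f n ω) atTop (𝓝 0)) {K : ℝ}
    (hK : 0 ≤ K) : Tendsto (fun n => ∫ ω, min (f n ω) K ∂μ) atTop (𝓝 0) := by
  have hdominated := tendsto_integral_of_dominated_convergence (μ := μ)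
    (F := fun n ω => min (f n ω) K) (f := fun _ => 0) (fun _ => K)
    (fun n => (hf_int n).aestronglyMeasurable.inf aestronglyMeasurable_const) (integrable_const K)
    (fun n => ae_of_all _ fun ω => ?_) ?_
  · simpa only [integral_zero] using hdominated
  · rw [Real.norm_of_nonneg (le_min (hf n ω) hK)]
    exact min_le_right _ _
  · filter_upwards [hlim] with ω hω
    simpa only [min_eq_left hK] using hω.min (tendsto_const_nhds (x := K))

variable (hf_sq_int : ∀ n, Integrable (fun ω => f n ω ^ 2) μ) {C : ℝ}
  (hC : ∀ n, ∫ ω, f n ω ^ 2 ∂μ ≤ C)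
include hf_sq_int hC

theorem integral_le_integral_min_add {K : ℝ} (hK : 0 < K) (n : ℕ) :
    ∫ ω, f n ω ∂μ ≤ ∫ ω, min (f n ω) K ∂μ + C / K := by
  have hmin_int : Integrable (fun ω => min (f n ω) K) μ := (hf_int n).inf (integrable_const K)
  calc ∫ ω, f n ω ∂μ ≤ ∫ ω, (min (f n ω) K + f n ω ^ 2 / K) ∂μ := by
        refine integral_mono (hf_int n) (hmin_int.add ((hf_sq_int n).div_const _)) fun ω => ?_
        rcases le_total (f n ω) K with hle | hle
        · simp only [min_eq_left hle]
          exact le_add_of_nonneg_right (by positivity)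
        · simp only [min_eq_right hle]
          refine le_add_of_nonneg_of_le hK.le ((le_div_iff₀ hK).2 ?_)
          rw [sq]
          exact mul_le_mul_of_nonneg_left hle (hf n ω)
    _ = ∫ ω, min (f n ω) K ∂μ + (∫ ω, f n ω ^ 2 ∂μ) / K := by
        rw [integral_add hmin_int ((hf_sq_int n).div_const _), integral_div]
    _ ≤ _ := by
        gcongr
        exact hC n

theorem tendsto_integral_zero_of_integral_sq_le
    (hlim : ∀ᵐ ω ∂μ, Tendsto (fun n => f n ω) atTop (𝓝 0)) :
    Tendsto (fun n => ∫ ω, f n ω ∂μ) atTop (𝓝 0) := by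
  have htail : Tendsto (fun K => C / K) atTop (𝓝 0) := tendsto_const_nhds.div_atTop tendsto_id
  refine tendsto_order.2 ⟨fun ε hε => Eventually.of_forall fun n =>
    hε.trans_le (integral_nonneg (hf n)), fun ε hε => ?_⟩
  obtain ⟨K, hK_tail, hK⟩ := ((htail.eventually_lt_const (half_pos hε)).and
    (eventually_gt_atTop 0)).exists
  filter_upwards [(tendsto_integral_min_zero hf hf_int hlim hK.le).eventually_lt_const
    (half_pos hε)] with n hn
  linarith [integral_le_integral_min_add hf hf_int hf_sq_int hC hK n]

end UniformIntegrability

end Probability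

theorem real_inner_sub_sq_le {E : Type*} [SeminormedAddCommGroup E] [InnerProductSpace ℝ E]
    (u v w : E) :
    (inner ℝ u (v - w) : ℝ) ^ 2 ≤ 2 * ‖u‖ ^ 2 * ‖v‖ ^ 2 + 2 * ‖u‖ ^ 2 * ‖w‖ ^ 2 := by
  calc (inner ℝ u (v - w) : ℝ) ^ 2 = |inner ℝ u (v - w)| ^ 2 := (sq_abs _).symm
    _ ≤ (‖u‖ * (‖v‖ + ‖w‖)) ^ 2 := by
        gcongr
        exact (abs_real_inner_le_norm u (v - w)).trans (by gcongr; exact norm_sub_le v w)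
    _ = ‖u‖ ^ 2 * (‖v‖ + ‖w‖) ^ 2 := mul_pow _ _ _
    _ ≤ ‖u‖ ^ 2 * (2 * (‖v‖ ^ 2 + ‖w‖ ^ 2)) := by gcongr; exact add_sq_le
    _ = _ := by ring

namespace AdaGradNormProcess

variable {E Ω : Type*} [NormedAddCommGroup E] [InnerProductSpace ℝ E] [FiniteDimensional ℝ E]
  {m0 : MeasurableSpace Ω} {P : Measure Ω} {ℱ : Filtration ℕ m0} {g : E → ℝ}
  {L σ₀ σ₁ α₀ S₀ R : ℝ} {G θ : ℕ → Ω → E} {S : ℕ → Ω → ℝ}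
  (h : AdaGradNormProcess P ℱ g σ₀ σ₁ α₀ S₀ R G θ S)
include h

section Noise

variable (hgrad : Continuous (gradient g)) {Φ : E × ℝ → E} (hΦ : Continuous Φ)
include hgrad hΦ

theorem stronglyMeasurable_inner_noise (n : ℕ) : StronglyMeasurable[ℱ (n + 1)] fun ω =>
    inner ℝ (Φ (θ n ω, (√(S n ω))⁻¹)) (G n ω - gradient g (θ n ω)) :=
  ((h.stronglyMeasurable hΦ n).mono (ℱ.mono n.le_succ)).inner ((h.measurable_G n).sub
    ((h.stronglyMeasurable (hgrad.comp continuous_fst) n).mono (ℱ.mono n.le_succ)))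

variable [IsFiniteMeasure P]

theorem memLp_inner_noise (n : ℕ) : MemLp (fun ω =>
    inner ℝ (Φ (θ n ω, (√(S n ω))⁻¹)) (G n ω - gradient g (θ n ω))) 2 P := by
  obtain ⟨B, hB⟩ := h.exists_norm_le hΦ n
  obtain ⟨B', hB'⟩ := h.exists_norm_le (hgrad.comp continuous_fst) n
  have hG : MemLp (G n) 2 P :=
    (memLp_two_iff_integrable_sq_norm (h.integrable_G n).aestronglyMeasurable).2 (h.integrable_sq n)
  have hgradient : MemLp (fun ω => gradient g (θ n ω)) 2 P :=
    MemLp.of_bound (h.integrable (hgrad.comp continuous_fst) n).aestronglyMeasurable B'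
      (ae_of_all _ hB')
  refine (hG.sub hgradient).of_le_mul (c := B)
    ((h.stronglyMeasurable_inner_noise hgrad hΦ n).mono (ℱ.le _)).aestronglyMeasurable
    (ae_of_all _ fun ω => ?_)
  exact (norm_inner_le_norm _ _).trans (mul_le_mul_of_nonneg_right (hB ω) (norm_nonneg _))

theorem condExp_inner_noise (n : ℕ) : P[fun ω =>
    inner ℝ (Φ (θ n ω, (√(S n ω))⁻¹)) (G n ω - gradient g (θ n ω)) | ℱ n] =ᵐ[P] 0 := by
  have hdrift : Continuous fun p : E × ℝ => (inner ℝ (Φ p) (gradient g p.1) : ℝ) := by fun_prop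
  simp only [inner_sub_right]
  filter_upwards [condExp_sub (h.integrable_inner hΦ n) (h.integrable hdrift n) (ℱ n),
    h.condExp_inner hΦ n] with ω hsub hunbiased
  refine hsub.trans ?_
  rw [Pi.sub_apply, hunbiased, condExp_of_stronglyMeasurable (ℱ.le n)
    (h.stronglyMeasurable hdrift n) (h.integrable hdrift n), sub_self, Pi.zero_apply]

theorem integral_sq_inner_noise_le (n : ℕ) :
    ∫ ω, (inner ℝ (Φ (θ n ω, (√(S n ω))⁻¹)) (G n ω - gradient g (θ n ω))) ^ 2 ∂P ≤
      ∫ ω, 2 * ‖Φ (θ n ω, (√(S n ω))⁻¹)‖ ^ 2 *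
        ((σ₀ + 1) * ‖gradient g (θ n ω)‖ ^ 2 + σ₁) ∂P := by
  have hweight : Continuous fun p => 2 * ‖Φ p‖ ^ 2 := by fun_prop
  have hG_int := h.integrable_mul_sq hweight n
  have hgrad_int := h.integrable (Φ := fun p => 2 * ‖Φ p‖ ^ 2 * ‖gradient g p.1‖ ^ 2)
    (by fun_prop) n
  have hvariance_int := h.integrable
    (Φ := fun p => 2 * ‖Φ p‖ ^ 2 * (σ₀ * ‖gradient g p.1‖ ^ 2 + σ₁)) (by fun_prop) n
  calc ∫ ω, (inner ℝ (Φ (θ n ω, (√(S n ω))⁻¹)) (G n ω - gradient g (θ n ω))) ^ 2 ∂P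
      ≤ ∫ ω, (2 * ‖Φ (θ n ω, (√(S n ω))⁻¹)‖ ^ 2 * ‖G n ω‖ ^ 2
        + 2 * ‖Φ (θ n ω, (√(S n ω))⁻¹)‖ ^ 2 * ‖gradient g (θ n ω)‖ ^ 2) ∂P :=
        integral_mono (h.memLp_inner_noise hgrad hΦ n).integrable_sq (hG_int.add hgrad_int)
          fun ω => real_inner_sub_sq_le _ _ _
    _ ≤ ∫ ω, 2 * ‖Φ (θ n ω, (√(S n ω))⁻¹)‖ ^ 2 * (σ₀ * ‖gradient g (θ n ω)‖ ^ 2 + σ₁) ∂P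
        + ∫ ω, 2 * ‖Φ (θ n ω, (√(S n ω))⁻¹)‖ ^ 2 * ‖gradient g (θ n ω)‖ ^ 2 ∂P := by
        rw [integral_add hG_int hgrad_int]
        exact add_le_add_left
          (h.integral_mul_sq_le hgrad hweight (fun x a _ => by positivity) n) _
    _ = _ := by
        rw [← integral_add hvariance_int hgrad_int]
        congr with ω
        ring

end Noise

variable [IsFiniteMeasure P] (hg : IsNonnegSmooth L g)
include hg

theorem ae_tendsto_sum_inner {H : E → E} (hH : Continuous H) {C C' : ℝ} (hC : ∀ x, ‖H x‖ ≤ C)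
    (hC' : ∀ x, ‖H x‖ ≤ C' * ‖gradient g x‖) :
    ∀ᵐ ω ∂P, ∃ l, Tendsto (fun n => ∑ k ∈ Finset.range n,
      (√(S k ω))⁻¹ * inner ℝ (H (θ k ω)) (G k ω - gradient g (θ k ω))) atTop (𝓝 l) := by
  have hgrad := hg.continuous_gradient
  have hσ₀ := h.σ₀_nonneg
  have hσ₁ := h.σ₁_nonneg
  have hΦ : Continuous fun p : E × ℝ => p.2 • H p.1 := by fun_prop
  simp only [← real_inner_smul_left]
  refine ae_tendsto_sum_of_condExp_eq_zero (h.stronglyMeasurable_inner_noise hgrad hΦ)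
    (h.memLp_inner_noise hgrad hΦ) (h.condExp_inner_noise hgrad hΦ)
    (((h.summable_integral_gradient_sq hg).mul_left
      (2 * (C ^ 2 * (σ₀ + 1) + C' ^ 2 * σ₁))).of_nonneg_of_le
      (fun n => integral_nonneg fun ω => sq_nonneg _) fun n => ?_)
  refine (h.integral_sq_inner_noise_le hgrad hΦ n).trans ?_
  rw [← integral_const_mul]
  refine integral_mono (h.integrable (Φ := fun p => 2 * ‖p.2 • H p.1‖ ^ 2 *
    ((σ₀ + 1) * ‖gradient g p.1‖ ^ 2 + σ₁)) (by fun_prop) n) (h.integrable (Φ := fun p =>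
    2 * (C ^ 2 * (σ₀ + 1) + C' ^ 2 * σ₁) * (p.2 ^ 2 * ‖gradient g p.1‖ ^ 2)) (by fun_prop) n)
    fun ω => ?_
  have hbounded := pow_le_pow_left₀ (norm_nonneg _) (hC (θ n ω)) 2
  have hvanishing := pow_le_pow_left₀ (norm_nonneg _) (hC' (θ n ω)) 2
  simp only [norm_smul, mul_pow, Real.norm_eq_abs, sq_abs] at hvanishing ⊢
  linear_combination mul_le_mul_of_nonneg_left hbounded
      (show 0 ≤ 2 * (√(S n ω))⁻¹ ^ 2 * ((σ₀ + 1) * ‖gradient g (θ n ω)‖ ^ 2) by positivity)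
    + mul_le_mul_of_nonneg_left hvanishing (show 0 ≤ 2 * (√(S n ω))⁻¹ ^ 2 * σ₁ by positivity)

theorem ae_tendsto_sum_value : ∀ᵐ ω ∂P, ∃ l, Tendsto (fun n => ∑ k ∈ Finset.range n,
    (√(S k ω))⁻¹ * inner ℝ ((2 * √(1 + g (θ k ω)))⁻¹ • gradient g (θ k ω))
      (G k ω - gradient g (θ k ω))) atTop (𝓝 l) := by
  have hgrad := hg.continuous_gradient
  have hvalue := hg.differentiable.continuous
  have hroot x : 1 ≤ √(1 + g x) := Real.one_le_sqrt.2 (le_add_of_nonneg_right (hg.nonneg x))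
  have hroot_pos x : 0 < 2 * √(1 + g x) := by linarith [hroot x]
  have hnorm x : ‖(2 * √(1 + g x))⁻¹ • gradient g x‖ = ‖gradient g x‖ / (2 * √(1 + g x)) := by
    rw [norm_smul, Real.norm_of_nonneg (inv_nonneg.2 (hroot_pos x).le), inv_mul_eq_div]
  refine h.ae_tendsto_sum_inner hg (H := fun x => (2 * √(1 + g x))⁻¹ • gradient g x) (C := √L)
    (C' := 1) (by fun_prop (disch := exact fun x => (hroot_pos x).ne')) (fun x => ?_) fun x => ?_
  · rw [hnorm, div_le_iff₀ (hroot_pos x)]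
    linarith [hg.norm_gradient_le_sqrt x]
  · rw [hnorm, one_mul]
    exact div_le_self (norm_nonneg _) (by linarith [hroot x])

theorem ae_tendsto_sum_vector (j : ℕ) : ∀ᵐ ω ∂P, ∃ l, Tendsto (fun n => ∑ k ∈ Finset.range n,
    (min 1 (j * ‖gradient g (θ k ω)‖) * (√(S k ω))⁻¹) • (G k ω - gradient g (θ k ω)))
    atTop (𝓝 l) := by
  have hgrad := hg.continuous_gradient
  set b := stdOrthonormalBasis ℝ E
  have hnorm (x : E) (i) : ‖min 1 (j * ‖gradient g x‖) • b i‖ = min 1 (j * ‖gradient g x‖) := by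
    rw [norm_smul, b.norm_eq_one, mul_one, Real.norm_of_nonneg (by positivity)]
  have hcoordinate := ae_all_iff.2 fun i => h.ae_tendsto_sum_inner hg (C := 1) (C' := j)
    (H := fun x => min 1 (j * ‖gradient g x‖) • b i) (by fun_prop)
    (fun x => (hnorm x i).trans_le (min_le_left _ _))
    fun x => (hnorm x i).trans_le (min_le_right _ _)
  filter_upwards [hcoordinate] with ω hω
  choose l hl using hω
  refine ⟨∑ i, l i • b i, (tendsto_finsetSum Finset.univ fun i _ =>
    (hl i).smul_const (b i)).congr fun n => ?_⟩
  simp_rw [Finset.sum_smul]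
  rw [Finset.sum_comm]
  refine Finset.sum_congr rfl fun k _ => ?_
  rw [← b.sum_repr' ((min 1 (j * ‖gradient g (θ k ω)‖) * (√(S k ω))⁻¹) •
    (G k ω - gradient g (θ k ω)))]
  refine Finset.sum_congr rfl fun i _ => ?_
  rw [real_inner_smul_left, inner_smul_right, ← mul_assoc, mul_comm (√(S k ω))⁻¹]

theorem ae_summable_gradientWeight_mul_sq : ∀ᵐ ω ∂P, Summable fun n =>
    gradientWeight σ₀ σ₁ (gradient g (θ n ω)) * ((√(S n ω))⁻¹ ^ 2 * ‖G n ω‖ ^ 2) := by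
  have hgrad := hg.continuous_gradient
  have hweight : Continuous fun p : E × ℝ => gradientWeight σ₀ σ₁ (gradient g p.1) * p.2 ^ 2 :=
    ((continuous_gradientWeight h.σ₀_nonneg h.σ₁_nonneg).comp (hgrad.comp continuous_fst)).mul
      (by fun_prop)
  have hnonneg n ω : 0 ≤
      gradientWeight σ₀ σ₁ (gradient g (θ n ω)) * ((√(S n ω))⁻¹ ^ 2 * ‖G n ω‖ ^ 2) :=
    mul_nonneg (gradientWeight_nonneg h.σ₀_nonneg h.σ₁_nonneg _) (by positivity)
  refine ae_summable_of_summable_integral hnonneg (fun n => ?_)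
    ((h.summable_integral_gradient_sq hg).of_nonneg_of_le
      (fun n => integral_nonneg (hnonneg n)) fun n => ?_)
  · simpa only [mul_assoc] using h.integrable_mul_sq hweight n
  · simp only [mul_left_comm (gradientWeight σ₀ σ₁ _)]
    exact h.integral_gradientWeight_mul_sq_le hgrad (Φ := fun p => p.2 ^ 2) (by fun_prop)
      (fun _ a _ => sq_nonneg a) n

theorem ae_regularNoise : ∀ᵐ ω ∂P, RegularNoise σ₀ σ₁ g (G · ω) (θ · ω) (S · ω) := by
  have hgrad := hg.continuous_gradient
  filter_upwards [ae_summable_of_summable_integral (fun n ω => by positivity)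
      (h.integrable (Φ := fun p => p.2 ^ 2 * ‖gradient g p.1‖ ^ 2) (by fun_prop))
      (h.summable_integral_gradient_sq hg), h.ae_summable_gradientWeight_mul_sq hg,
    h.ae_tendsto_sum_value hg, ae_all_iff.2 (h.ae_tendsto_sum_vector hg)]
    with ω hgradient hweight hvalue hvector
  exact ⟨hgradient, hweight, hvalue, hvector⟩

variable {δ : ℝ} (hδ : 0 < δ) (hflat : ∀ᶠ x in Bornology.cobounded E, δ < ‖gradient g x‖)
include hδ hflat

theorem ae_frequently_value_le : ∀ᵐ ω ∂P, ∃ N, ∃ᶠ n in atTop, g (θ n ω) ≤ N := by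
  have hvalue := hg.differentiable.continuous
  have hvalue_sq : Continuous fun p : E × ℝ => g p.1 ^ 2 := by fun_prop
  obtain ⟨C, hC⟩ := h.exists_integral_value_sq_le hg hδ hflat
  filter_upwards [ae_frequently_le_of_integral_le (fun n ω => sq_nonneg (g (θ n ω)))
    (fun n => ((h.stronglyMeasurable hvalue_sq n).mono (ℱ.le n)).measurable)
    (h.integrable hvalue_sq) hC] with ω ⟨N, hN⟩
  exact ⟨√N, hN.mono fun n hn => Real.le_sqrt_of_sq_le hn⟩

theorem exists_integral_gradient_sq_sq_le :
    ∃ C, ∀ n, ∫ ω, (‖gradient g (θ n ω)‖ ^ 2) ^ 2 ∂P ≤ C := by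
  have hgrad := hg.continuous_gradient
  have hvalue := hg.differentiable.continuous
  obtain ⟨C, hC⟩ := h.exists_integral_value_sq_le hg hδ hflat
  refine ⟨(4 * L) ^ 2 * C, fun n => ?_⟩
  calc ∫ ω, (‖gradient g (θ n ω)‖ ^ 2) ^ 2 ∂P ≤ ∫ ω, (4 * L) ^ 2 * g (θ n ω) ^ 2 ∂P := by
        refine integral_mono (h.integrable (Φ := fun p => (‖gradient g p.1‖ ^ 2) ^ 2)
          (by fun_prop) n) (h.integrable (Φ := fun p => (4 * L) ^ 2 * g p.1 ^ 2)
          (by fun_prop) n) fun ω => ?_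
        simp only [← mul_pow]
        exact pow_le_pow_left₀ (sq_nonneg _) (hg.norm_gradient_sq_le _) 2
    _ ≤ _ := by
        rw [integral_const_mul]
        exact mul_le_mul_of_nonneg_left (hC n) (sq_nonneg _)

end AdaGradNormProcess

theorem adagrad_norm_mean_square_convergence_general {E Ω : Type*} [NormedAddCommGroup E]
    [InnerProductSpace ℝ E] [FiniteDimensional ℝ E] {m0 : MeasurableSpace Ω} {P : Measure Ω}
    [IsFiniteMeasure P] {ℱ : Filtration ℕ m0} {g : E → ℝ} {L σ₀ σ₁ α₀ S₀ R δ δ₀ δ₁ : ℝ}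
    {G θ : ℕ → Ω → E} {S : ℕ → Ω → ℝ} (h : AdaGradNormProcess P ℱ g σ₀ σ₁ α₀ S₀ R G θ S)
    (hg : IsNonnegSmooth L g) (hδ : 0 < δ)
    (hflat : ∀ᶠ x in Bornology.cobounded E, δ < ‖gradient g x‖)
    (hsard : IsNowhereDense (g '' {x | gradient g x = 0})) (hδ₀ : 0 < δ₀)
    (hsharp : ∀ᵐ ω ∂P, ∀ n, ‖gradient g (θ n ω)‖ ≤ δ₀ → ‖G n ω‖ ≤ δ₁) :
    Tendsto (fun n => ∫ ω, ‖gradient g (θ n ω)‖ ^ 2 ∂P) atTop (𝓝 0) := by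
  have hgrad := hg.continuous_gradient
  obtain ⟨C, hC⟩ := h.exists_integral_gradient_sq_sq_le hg hδ hflat
  refine tendsto_integral_zero_of_integral_sq_le (fun n ω => sq_nonneg _)
    (h.integrable (Φ := fun p => ‖gradient g p.1‖ ^ 2) (by fun_prop))
    (h.integrable (Φ := fun p => (‖gradient g p.1‖ ^ 2) ^ 2) (by fun_prop)) hC ?_
  filter_upwards [h.ae_regularNoise hg, h.ae_frequently_value_le hg hδ hflat, hsharp]
    with ω hnoise hfrequently hsharp
  simpa using ((h.path ω).tendsto_gradient_zero hg hnoise h.σ₀_nonneg h.σ₁_nonneg hδ hflat hsard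
    hδ₀ hsharp hfrequently).norm.pow 2

/-- Theorem 5.4 (Mean-square convergence of AdaGrad-Norm):
`lim_{n→∞} E[‖∇g(θ_n)‖²] = 0`. -/
theorem adagrad_norm_mean_square_convergence
    {d : ℕ} {Ω : Type*} {m0 : MeasurableSpace Ω} (P : Measure Ω) [IsProbabilityMeasure P]
    (ℱ : Filtration ℕ m0)
    (g : EuclideanSpace ℝ (Fin d) → ℝ)
    (L σ₀ σ₁ α₀ S₀ δt δ₀ δ₁ : ℝ)
    (hL : 0 < L) (hσ₀ : 0 ≤ σ₀) (hσ₁ : 0 ≤ σ₁) (hα₀ : 0 < α₀) (hS₀ : 0 < S₀)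
    (hδ₀ : 0 < δ₀) (hδ₁ : 0 < δ₁)
    (hg_diff : ContDiff ℝ 1 g)
    (hg_nonneg : ∀ x, 0 ≤ g x)
    (hg_smooth : ∀ x y, ‖gradient g x - gradient g y‖ ≤ L * ‖x - y‖)
    (hδt : 0 < δt)
    (hflat : ∀ᶠ x in Bornology.cobounded (EuclideanSpace ℝ (Fin d)),
      δt < ‖gradient g x‖)
    (hg_coercive : Tendsto g (Bornology.cobounded (EuclideanSpace ℝ (Fin d))) atTop)
    (hg_sard : interior (closure {y : ℝ |
      ∃ x : EuclideanSpace ℝ (Fin d), gradient g x = 0 ∧ g x = y}) = ∅)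
    (θ₁ : EuclideanSpace ℝ (Fin d))
    (G θ : ℕ → Ω → EuclideanSpace ℝ (Fin d))
    (S : ℕ → Ω → ℝ)
    (hG_meas : ∀ n, 1 ≤ n → StronglyMeasurable[ℱ n] (G n))
    (hG_int : ∀ n, 1 ≤ n → Integrable (G n) P)
    (hG_sq_int : ∀ n, 1 ≤ n → Integrable (fun ω => ‖G n ω‖ ^ 2) P)
    (hθ_adapted : ∀ n, 1 ≤ n → StronglyMeasurable[ℱ (n - 1)] (θ n))
    (hθ_init : ∀ ω, θ 1 ω = θ₁)
    (hS_init : ∀ ω, S 0 ω = S₀)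
    (hS_rec : ∀ n, 1 ≤ n → ∀ ω, S n ω = S (n - 1) ω + ‖G n ω‖ ^ 2)
    (hθ_rec : ∀ n, 1 ≤ n → ∀ ω,
      θ (n + 1) ω = θ n ω - (α₀ / Real.sqrt (S n ω)) • G n ω)
    (hG_unbiased : ∀ n, 1 ≤ n →
      P[G n | ℱ (n - 1)] =ᵐ[P] fun ω => gradient g (θ n ω))
    (hG_var : ∀ n, 1 ≤ n → ∀ᵐ ω ∂P,
      (P[fun ω => ‖G n ω‖ ^ 2 | ℱ (n - 1)]) ω ≤ σ₀ * ‖gradient g (θ n ω)‖ ^ 2 + σ₁)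
    (hG_sharp : ∀ᵐ ω ∂P, ∀ n, 1 ≤ n →
      ‖gradient g (θ n ω)‖ ≤ δ₀ → ‖G n ω‖ ≤ δ₁) :
    Tendsto (fun n => ∫ ω, ‖gradient g (θ n ω)‖ ^ 2 ∂P) atTop (𝓝 0) := by
  have hprocess : AdaGradNormProcess P ℱ g σ₀ σ₁ α₀ S₀ ‖θ₁‖ (fun n => G (n + 1))
      (fun n => θ (n + 1)) S :=
    { α₀_pos := hα₀
      S₀_pos := hS₀
      σ₀_nonneg := hσ₀
      σ₁_nonneg := hσ₁
      norm_θ_zero_le := fun ω => (congrArg norm (hθ_init ω)).le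
      le_S_zero := fun ω => (hS_init ω).ge
      measurable_S_zero := by
        rw [funext hS_init]
        exact stronglyMeasurable_const
      S_succ := fun n => hS_rec (n + 1) n.succ_pos
      θ_succ := fun n => hθ_rec (n + 1) n.succ_pos
      measurable_θ := fun n => hθ_adapted (n + 1) n.succ_pos
      measurable_G := fun n => hG_meas (n + 1) n.succ_pos
      integrable_G := fun n => hG_int (n + 1) n.succ_pos
      integrable_sq := fun n => hG_sq_int (n + 1) n.succ_pos
      unbiased := fun n => hG_unbiased (n + 1) n.succ_pos
      variance := fun n => hG_var (n + 1) n.succ_pos }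
  have hsharp : ∀ᵐ ω ∂P, ∀ n, ‖gradient g (θ (n + 1) ω)‖ ≤ δ₀ → ‖G (n + 1) ω‖ ≤ δ₁ :=
    hG_sharp.mono fun ω hω n => hω (n + 1) n.succ_pos
  exact (tendsto_add_atTop_iff_nat 1).1 (adagrad_norm_mean_square_convergence_general hprocess
    ⟨hL, hg_diff.differentiable one_ne_zero, hg_nonneg, hg_smooth⟩ hδt hflat hg_sard hδ₀ hsharp)
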